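/- arXiv:2206.03672 — 3 statements merged into one kernel-verified Lean document; each statement's English description precedes it below -/
import Mathlib

section
/- Let Ω ⊂ ℝⁿ be a bounded open set with Lipschitz boundary, Y^m = (0,1)^m with m > n, and let R be an m×n real matrix satisfying R^T k ≠ 0 for all nonzero k ∈ ℤ^m. If (u_η) is a bounded sequence in L^p(Ω), 1 < p < ∞, then there exist a vanishing subsequence η_k and a function u₀ ∈ L^p(Ω × Y^m) (Y^m-periodic in y) such that for every test function φ ∈ L^q(Ω; C_♯(Y^m)) (with 1/p + 1/q = 1), ∫_Ω u_{η_k}(x) φ(x, R x / η_k) dx → ∫_Ω ∫_{Y^m} u₀(x,y) φ(x,y) dx dy. -/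
open MeasureTheory Filter Topology Matrix

noncomputable section

/-- The open unit cube `Y^m = (0,1)^m`. -/
def cube (m : ℕ) : Set (Fin m → ℝ) := Set.univ.pi fun _ => Set.Ioo (0:ℝ) 1

/-- `Y^m`-periodicity: invariance under integer translations. -/
def Zper {m : ℕ} {α : Type*} (g : (Fin m → ℝ) → α) : Prop :=
  ∀ (k : Fin m → ℤ) (y : Fin m → ℝ), g (y + fun i => (k i : ℝ)) = g y

/-- Cut-and-projection irrationality condition: `Rᵀ k ≠ 0` for nonzero integer `k`. -/
def Irr {m n : ℕ} (R : Matrix (Fin m) (Fin n) ℝ) : Prop :=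
  ∀ k : Fin m → ℤ, k ≠ 0 → R.transpose.mulVec (fun i => (k i : ℝ)) ≠ 0

/-- Admissible test functions: `φ ∈ L^q(Ω; C_♯(Y^m))`. -/
def TestFun {n m : ℕ} (q : ℝ) (Ω : Set (Fin n → ℝ))
    (φ : (Fin n → ℝ) → (Fin m → ℝ) → ℝ) : Prop :=
  (∀ x, Continuous (φ x)) ∧ (∀ x, Zper (φ x)) ∧
  (∀ y, AEMeasurable (fun x => φ x y) (volume.restrict Ω)) ∧
  Integrable (fun x => (⨆ y, |φ x y|) ^ q) (volume.restrict Ω)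

/-- Weak two-scale cut-and-projection convergence along a sequence of scales `η`. -/
def WeakTwoScale {n m : ℕ} (q : ℝ) (Ω : Set (Fin n → ℝ)) (R : Matrix (Fin m) (Fin n) ℝ)
    (η : ℕ → ℝ) (u : ℕ → (Fin n → ℝ) → ℝ)
    (u₀ : (Fin n → ℝ) → (Fin m → ℝ) → ℝ) : Prop :=
  ∀ φ : (Fin n → ℝ) → (Fin m → ℝ) → ℝ, TestFun q Ω φ →
    Tendsto (fun k => ∫ x in Ω, u k x * φ x ((η k)⁻¹ • R.mulVec x)) atTop
      (𝓝 (∫ x in Ω, ∫ y in cube m, u₀ x y * φ x y))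

/-- Classical gradient on `ℝ^m`. -/
def gradY {m : ℕ} (θ : (Fin m → ℝ) → ℝ) (y : Fin m → ℝ) : Fin m → ℝ :=
  fun j => fderiv ℝ θ y (Pi.single j 1)

/-- The projected gradient `grad_R θ = Rᵀ ∇_y θ`. -/
def gradR {m n : ℕ} (R : Matrix (Fin m) (Fin n) ℝ) (θ : (Fin m → ℝ) → ℝ)
    (y : Fin m → ℝ) : Fin n → ℝ :=
  R.transpose.mulVec (gradY θ y)

/-- The projected divergence `div_R φ = (Rᵀ ∇_y) · φ`. -/
def divR {m n : ℕ} (R : Matrix (Fin m) (Fin n) ℝ) (φ : (Fin m → ℝ) → Fin n → ℝ)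
    (y : Fin m → ℝ) : ℝ :=
  ∑ i, gradR R (fun z => φ z i) y i

/-- `G` is the weak periodic cut-and-projection gradient `grad_R θ`. -/
def IsWeakGradR {m n : ℕ} (R : Matrix (Fin m) (Fin n) ℝ) (θ : (Fin m → ℝ) → ℝ)
    (G : (Fin m → ℝ) → Fin n → ℝ) : Prop :=
  ∀ ψ : (Fin m → ℝ) → Fin n → ℝ, ContDiff ℝ (⊤ : ℕ∞) ψ → (∀ i, Zper fun y => ψ y i) →
    ∫ y in cube m, θ y * divR R ψ y = - ∫ y in cube m, G y ⬝ᵥ ψ y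

/-- `d` is the weak periodic cut-and-projection divergence `div_R φ`. -/
def IsWeakDivR {m n : ℕ} (R : Matrix (Fin m) (Fin n) ℝ) (φ : (Fin m → ℝ) → Fin n → ℝ)
    (d : (Fin m → ℝ) → ℝ) : Prop :=
  ∀ ψ : (Fin m → ℝ) → ℝ, ContDiff ℝ (⊤ : ℕ∞) ψ → Zper ψ →
    ∫ y in cube m, φ y ⬝ᵥ gradR R ψ y = - ∫ y in cube m, d y * ψ y

/-- `G` is the weak (full) periodic gradient `∇_y θ`. -/
def IsWeakGrad {m : ℕ} (θ : (Fin m → ℝ) → ℝ) (G : (Fin m → ℝ) → Fin m → ℝ) : Prop :=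
  ∀ ψ : (Fin m → ℝ) → ℝ, ContDiff ℝ (⊤ : ℕ∞) ψ → Zper ψ → ∀ j,
    ∫ y in cube m, θ y * gradY ψ y j = - ∫ y in cube m, G y j * ψ y

/-- `G` is the weak gradient of `u` on `Ω`. -/
def IsWeakGradOn {n : ℕ} (Ω : Set (Fin n → ℝ)) (u : (Fin n → ℝ) → ℝ)
    (G : (Fin n → ℝ) → Fin n → ℝ) : Prop :=
  ∀ ψ : (Fin n → ℝ) → ℝ, ContDiff ℝ (⊤ : ℕ∞) ψ → HasCompactSupport ψ → tsupport ψ ⊆ Ω → ∀ j,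
    ∫ x in Ω, u x * fderiv ℝ ψ x (Pi.single j 1) = - ∫ x in Ω, G x j * ψ x

/-- `d` is the weak divergence of `v` on `Ω`. -/
def IsWeakDivOn {n : ℕ} (Ω : Set (Fin n → ℝ)) (v : (Fin n → ℝ) → Fin n → ℝ)
    (d : (Fin n → ℝ) → ℝ) : Prop :=
  ∀ ψ : (Fin n → ℝ) → ℝ, ContDiff ℝ (⊤ : ℕ∞) ψ → HasCompactSupport ψ → tsupport ψ ⊆ Ω →
    ∫ x in Ω, v x ⬝ᵥ (fun j => fderiv ℝ ψ x (Pi.single j 1)) = - ∫ x in Ω, d x * ψ x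

/-- Membership in `W_0^{1,p}(Ω)` with weak gradient `G`. -/
def MemW1p0 {n : ℕ} (p : ℝ) (Ω : Set (Fin n → ℝ)) (u : (Fin n → ℝ) → ℝ)
    (G : (Fin n → ℝ) → Fin n → ℝ) : Prop :=
  Integrable (fun x => |u x| ^ p) (volume.restrict Ω) ∧
  Integrable (fun x => ‖G x‖ ^ p) (volume.restrict Ω) ∧
  IsWeakGradOn Ω u G ∧
  ∃ v : ℕ → (Fin n → ℝ) → ℝ,
    (∀ j, ContDiff ℝ (⊤ : ℕ∞) (v j) ∧ HasCompactSupport (v j) ∧ tsupport (v j) ⊆ Ω) ∧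
    Tendsto (fun j => (∫ x in Ω, |v j x - u x| ^ p) +
      ∫ x in Ω, ‖(fun i => fderiv ℝ (v j) x (Pi.single i 1)) - G x‖ ^ p) atTop (𝓝 0)


lemma pair_clm {Z : Type*} [MeasurableSpace Z] (ν : Measure Z) {p q : ℝ} (hpq : p.HolderConjugate q)
    [Fact (1 ≤ ENNReal.ofReal q)] (f : Z → ℝ) (hf : MemLp f (ENNReal.ofReal p) ν) :
    ∃ G : StrongDual ℝ (Lp ℝ (ENNReal.ofReal q) ν), ∀ g, G g = ∫ z, f z * g z ∂ν := by
  have hintg : ∀ g : Lp ℝ (ENNReal.ofReal q) ν, Integrable (fun z => f z * g z) ν := fun g => by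
    have : ENNReal.HolderConjugate (ENNReal.ofReal p) (ENNReal.ofReal q) := hpq.ennrealOfReal
    exact MemLp.integrable_mul hf (Lp.memLp g)
  refine ⟨LinearMap.mkContinuous
    { toFun := fun g => ∫ z, f z * g z ∂ν
      map_add' := fun g h => ?_
      map_smul' := fun c g => ?_ } ((∫ a, ‖f a‖ ^ p ∂ν) ^ (1 / p)) (fun g => ?_), fun g => rfl⟩
  · rw [← integral_add (hintg g) (hintg h)]
    apply integral_congr_ae
    filter_upwards [Lp.coeFn_add g h] with z hz
    rw [hz]; simp [mul_add]
  · rw [RingHom.id_apply, smul_eq_mul, ← integral_const_mul]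
    apply integral_congr_ae
    filter_upwards [Lp.coeFn_smul c g] with z hz
    rw [hz]; simp; ring
  · have h1 := integral_mul_norm_le_Lp_mul_Lq hpq hf (Lp.memLp g)
    have h2 : ‖g‖ = (∫ a, ‖g a‖ ^ q ∂ν) ^ (1 / q) := by
      rw [Lp.norm_def, (Lp.memLp g).eLpNorm_eq_integral_rpow_norm (by simp [hpq.symm.pos]) (by simp)]
      rw [ENNReal.toReal_ofReal, ENNReal.toReal_ofReal hpq.symm.nonneg, one_div]
      positivity
    rw [h2]
    refine le_trans (norm_integral_le_integral_norm _) (le_trans (le_of_eq ?_) h1)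
    simp

lemma riesz_simple {Z : Type*} [MeasurableSpace Z] (ν : Measure Z) [IsFiniteMeasure ν] {q : ℝ} (hq : 1 < q)
    [Fact (1 ≤ ENNReal.ofReal q)] (G : StrongDual ℝ (Lp ℝ (ENNReal.ofReal q) ν)) :
    ∃ f : Z → ℝ, Measurable f ∧ Integrable f ν ∧ ∀ g : SimpleFunc Z ℝ, ∀ hg : MemLp g (ENNReal.ofReal q) ν,
      G (hg.toLp g) = ∫ z, f z * g z ∂ν := by
  classical
  let s : SignedMeasure Z :=
    { measureOf' := fun A => if hA : MeasurableSet A then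
        G (indicatorConstLp (ENNReal.ofReal q) hA (measure_ne_top ν A) 1) else 0
      empty' := by simp
      not_measurable' := fun A hA => by simp [hA]
      m_iUnion' := by
        intro A hA hd
        have hU : MeasurableSet (⋃ i, A i) := MeasurableSet.iUnion hA
        simp only [hA, hU, dite_true]
        have hF : ∀ F : Finset ℕ, MeasurableSet (⋃ i ∈ F, A i) :=
          fun F => F.measurableSet_biUnion fun i _ => hA i
        have key : Tendsto (fun F : Finset ℕ => indicatorConstLp (ENNReal.ofReal q) (hF F)
            (measure_ne_top ν _) (1:ℝ)) atTop
            (𝓝 (indicatorConstLp (ENNReal.ofReal q) hU (measure_ne_top ν _) (1:ℝ))) := by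
          apply tendsto_indicatorConstLp_set (by simp)
          have hs : ∑' i, ν (A i) ≠ ⊤ := by
            rw [← measure_iUnion hd hA]; exact measure_ne_top _ _
          refine tendsto_of_tendsto_of_tendsto_of_le_of_le tendsto_const_nhds
            (ENNReal.tendsto_tsum_compl_atTop_zero hs) (fun _ => zero_le) (fun F => ?_)
          refine le_trans (measure_mono ?_) (measure_iUnion_le _)
          intro z hz
          rcases hz with ⟨h1, h2⟩ | ⟨h1, h2⟩
          · exfalso; apply h2
            simp only [Set.mem_iUnion] at h1 ⊢
            obtain ⟨i, -, hi⟩ := h1; exact ⟨i, hi⟩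
          · simp only [Set.mem_iUnion] at h1 h2 ⊢
            obtain ⟨i, hi⟩ := h1
            exact ⟨⟨i, fun h => h2 ⟨i, h, hi⟩⟩, hi⟩
        have := (G.continuous.tendsto _).comp key
        rw [HasSum, SummationFilter.unconditional_filter]
        refine this.congr fun F => ?_
        simp only [Function.comp]
        rw [← map_sum]
        congr 1
        induction F using Finset.induction_on with
        | empty => simp
        | insert a F ha ih =>
          rw [Finset.sum_insert ha, ← ih, ← indicatorConstLp_disjoint_union]
          · congr 1; simp
          · rw [Set.disjoint_left]
            intro z hz hz'
            simp only [Set.mem_iUnion] at hz'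
            obtain ⟨i, hi, hzi⟩ := hz'
            have hne : a ≠ i := fun h => ha (by rw [h]; exact hi)
            exact Set.disjoint_left.1 (hd hne) hz hzi }
  have hs : ∀ A (hA : MeasurableSet A), s A =
      G (indicatorConstLp (ENNReal.ofReal q) hA (measure_ne_top ν A) 1) := fun A hA => by
    change (if hA : MeasurableSet A then _ else _) = _
    simp [hA]
  have hac : s ≪ᵥ ν.toENNRealVectorMeasure := by
    apply VectorMeasure.AbsolutelyContinuous.mk
    intro A hA h0
    rw [Measure.toENNRealVectorMeasure_apply_measurable hA] at h0
    rw [hs A hA]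
    have : indicatorConstLp (ENNReal.ofReal q) hA (measure_ne_top ν A) (1:ℝ) = 0 := by
      rw [← norm_eq_zero, norm_indicatorConstLp (by simp; linarith) (by simp)]
      have hq' : (ENNReal.ofReal q).toReal = q := ENNReal.toReal_ofReal (by linarith)
      rw [Measure.real, h0, hq', ENNReal.toReal_zero, Real.zero_rpow (by positivity), mul_zero]
    rw [this, map_zero]
  have hd := s.withDensityᵥ_rnDeriv_eq ν hac
  have hfi := SignedMeasure.integrable_rnDeriv s ν
  refine ⟨s.rnDeriv ν, SignedMeasure.measurable_rnDeriv s ν, hfi, fun g => ?_⟩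
  induction g using SimpleFunc.induction with
  | const c hA =>
    rename_i A
    intro hg
    have h1 : hg.toLp _ = c • indicatorConstLp (ENNReal.ofReal q) hA (measure_ne_top ν A) (1:ℝ) := by
      rw [indicatorConstLp, ← MemLp.toLp_const_smul]
      apply MemLp.toLp_congr
      refine .of_forall fun z => ?_
      by_cases hz : z ∈ A <;> simp [hz, SimpleFunc.piecewise_apply]
    rw [h1, map_smul, ← hs A hA, ← hd, withDensityᵥ_apply hfi hA, hd, smul_eq_mul, ← integral_const_mul,
      ← integral_indicator hA]
    congr 1; ext z
    by_cases hz : z ∈ A <;> simp [hz, SimpleFunc.piecewise_apply, mul_comm]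
  | add hdis hg hh =>
    rename_i g h
    intro hgh
    have hg' : MemLp g (ENNReal.ofReal q) ν := by
      exact g.memLp_of_isFiniteMeasure _ _
    have hh' : MemLp h (ENNReal.ofReal q) ν := by
      exact h.memLp_of_isFiniteMeasure _ _
    have : hgh.toLp _ = hg'.toLp g + hh'.toLp h := by
      rw [← MemLp.toLp_add]; rfl
    have hi : ∀ g : SimpleFunc Z ℝ, Integrable (fun z => s.rnDeriv ν z * g z) ν := fun g => by
      obtain ⟨C, hC⟩ := g.exists_forall_norm_le
      exact hfi.mul_bdd (c := C) g.aestronglyMeasurable (.of_forall hC)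
    rw [this, map_add, hg, hh, ← integral_add (hi g) (hi h)]
    simp [mul_add]

lemma riesz {Z : Type*} [MeasurableSpace Z] (ν : Measure Z) [IsFiniteMeasure ν] {p q : ℝ}
    (hpq : p.HolderConjugate q)
    [Fact (1 ≤ ENNReal.ofReal q)] (G : StrongDual ℝ (Lp ℝ (ENNReal.ofReal q) ν)) :
    ∃ f : Z → ℝ, MemLp f (ENNReal.ofReal p) ν ∧ ∀ g, G g = ∫ z, f z * g z ∂ν := by
  obtain ⟨f, hfm, hfi, hf⟩ := riesz_simple ν hpq.symm.lt G
  have hp := hpq.pos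
  have hq := hpq.symm.pos
  have hbound : ∫⁻ z, ‖f z‖ₑ ^ p ∂ν ≤ ENNReal.ofReal (‖G‖ ^ p) := by
    rw [lintegral_eq_nnreal]
    refine iSup₂_le fun φ hφ => ?_
    let S : SimpleFunc Z ℝ := SimpleFunc.piecewise {z | 0 ≤ f z} (hfm measurableSet_Ici)
      (SimpleFunc.const Z 1) (SimpleFunc.const Z (-1))
    have hS : ∀ z, f z * S z = |f z| := fun z => by
      by_cases h : 0 ≤ f z
      · simp [S, SimpleFunc.piecewise_apply, h, abs_of_nonneg h]
      · simp [S, SimpleFunc.piecewise_apply, h, abs_of_neg (not_le.1 h)]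
    have hS1 : ∀ z, |S z| = 1 := fun z => by
      by_cases h : 0 ≤ f z
      · simp [S, SimpleFunc.piecewise_apply, h]
      · simp [S, SimpleFunc.piecewise_apply, h]
    let g : SimpleFunc Z ℝ := S * φ.map (fun t : NNReal => (t:ℝ) ^ (1/q))
    have hg0 : ∀ z, g z = S z * (φ z : ℝ) ^ (1/q) := fun z => by
      simp [g]
    have hg : MemLp g (ENNReal.ofReal q) ν := g.memLp_of_isFiniteMeasure _ _
    have h1 := hf g hg
    let φr : SimpleFunc Z ℝ := φ.map (fun t : NNReal => (t:ℝ))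
    have hφi : Integrable (fun z => (φ z : ℝ)) ν := φr.integrable_of_isFiniteMeasure
    set a := ∫ z, (φ z : ℝ) ∂ν with ha
    have ha0 : 0 ≤ a := integral_nonneg fun z => (φ z).2
    have h2 : a ≤ G (hg.toLp g) := by
      rw [h1]
      have : Integrable (fun z => f z * g z) ν := by
        obtain ⟨C, hC⟩ := g.exists_forall_norm_le
        exact hfi.mul_bdd (c := C) g.aestronglyMeasurable (.of_forall hC)
      refine integral_mono hφi this fun z => ?_
      have h3 : (φ z : ℝ) ≤ |f z| ^ p := by
        have := hφ z
        rw [← ofReal_norm, ENNReal.ofReal_rpow_of_nonneg (norm_nonneg _) hp.le] at this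
        rw [← ENNReal.ofReal_coe_nnreal] at this
        exact (ENNReal.ofReal_le_ofReal_iff (by positivity)).1 this
      have h4 : (φ z : ℝ) ^ (1/p) ≤ |f z| := by
        calc (φ z : ℝ) ^ (1/p) ≤ (|f z| ^ p) ^ (1/p) := by gcongr
          _ = |f z| := by rw [← Real.rpow_mul (abs_nonneg _), mul_one_div_cancel hp.ne', Real.rpow_one]
      have h5 : (φ z : ℝ) = (φ z : ℝ) ^ (1/p) * (φ z : ℝ) ^ (1/q) := by
        rw [← Real.rpow_add_of_nonneg (φ z).coe_nonneg (by positivity) (by positivity), one_div, one_div,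
          hpq.inv_add_inv_eq_one, Real.rpow_one]
      simp only []
      rw [hg0, ← mul_assoc, hS]
      calc (φ z : ℝ) = _ := h5
        _ ≤ _ := by gcongr
    have h3 : ‖hg.toLp g‖ = a ^ (1/q) := by
      rw [Lp.norm_toLp, hg.eLpNorm_eq_integral_rpow_norm (by simp [hq]) (by simp),
        ENNReal.toReal_ofReal (by positivity), ENNReal.toReal_ofReal hq.le, one_div, ha]
      congr 2; ext z
      rw [hg0, norm_mul, Real.norm_eq_abs, hS1, one_mul, Real.norm_of_nonneg (by positivity),
        ← Real.rpow_mul (φ z).coe_nonneg, one_div_mul_cancel hq.ne', Real.rpow_one]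
    have h4 : a ≤ ‖G‖ * a ^ (1/q) := by
      rw [← h3]; exact h2.trans ((le_abs_self _).trans (G.le_opNorm _))
    have h5 : a ≤ ‖G‖ ^ p := by
      rcases ha0.eq_or_lt with h | h
      · rw [← h]; positivity
      · have h6 : a = a ^ (1/p) * a ^ (1/q) := by
          rw [← Real.rpow_add h, one_div, one_div, hpq.inv_add_inv_eq_one, Real.rpow_one]
        have h7 : a ^ (1/p) ≤ ‖G‖ := by
          have h8 : 0 < a ^ (1/q) := by positivity
          refine le_of_mul_le_mul_right ?_ h8
          rw [← h6]; exact h4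
        calc a = (a ^ (1/p)) ^ p := by rw [← Real.rpow_mul ha0, one_div_mul_cancel hp.ne', Real.rpow_one]
          _ ≤ _ := by gcongr
    calc (φ.map ((↑) : NNReal → ENNReal)).lintegral ν = ∫⁻ z, (φ z : ENNReal) ∂ν := by
          rw [← SimpleFunc.lintegral_eq_lintegral]; rfl
      _ = ENNReal.ofReal a := by
          rw [ha, ofReal_integral_eq_lintegral_ofReal hφi (.of_forall fun z => (φ z).2)]
          simp
      _ ≤ _ := ENNReal.ofReal_le_ofReal h5
  have hfp : MemLp f (ENNReal.ofReal p) ν := by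
    refine ⟨hfm.aestronglyMeasurable, ?_⟩
    rw [eLpNorm_lt_top_iff_lintegral_rpow_enorm_lt_top (by simp [hp]) (by simp),
      ENNReal.toReal_ofReal hp.le]
    exact hbound.trans_lt (by simp)
  refine ⟨f, hfp, ?_⟩
  obtain ⟨H, hH⟩ := pair_clm ν hpq f hfp
  suffices h : G = H by intro g; rw [h, hH]
  ext g
  refine (Lp.simpleFunc.denseRange (E := ℝ) (μ := ν) (p := ENNReal.ofReal q) (by simp)).induction_on
    (p := fun g => G g = H g) g (isClosed_eq G.continuous H.continuous) fun g => ?_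
  have hm : MemLp (Lp.simpleFunc.toSimpleFunc g) (ENNReal.ofReal q) ν := Lp.simpleFunc.memLp g
  have he : (g : Lp ℝ (ENNReal.ofReal q) ν) = hm.toLp _ := by
    conv_lhs => rw [← Lp.simpleFunc.toLp_toSimpleFunc g]
  rw [he, hf, hH]
  apply integral_congr_ae
  filter_upwards [hm.coeFn_toLp] with z hz
  rw [hz]

/-- Projection to the torus. -/
def tor {m : ℕ} (y : Fin m → ℝ) : UnitAddTorus (Fin m) := fun i => (y i : UnitAddCircle)

lemma continuous_tor {m : ℕ} : Continuous (tor (m := m)) :=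
  continuous_pi fun i => (AddCircle.continuous_mk' 1).comp (continuous_apply i)

lemma volume_cube (m : ℕ) : volume (cube m) = 1 := by
  simp [cube, volume_pi_pi]

instance (m : ℕ) : IsProbabilityMeasure (volume.restrict (cube m)) :=
  ⟨by simp [volume_cube]⟩

lemma isClosed_setOf_tendsto_lip {F B : Type*} [SeminormedAddCommGroup F] [SeminormedAddCommGroup B]
    (M : ℕ → F → B) (N : F → B) (K : ℝ) (hM : ∀ k f g, ‖M k f - M k g‖ ≤ K * ‖f - g‖)
    (hN : ∀ f g, ‖N f - N g‖ ≤ K * ‖f - g‖) :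
    IsClosed {f | Tendsto (fun k => M k f) atTop (𝓝 (N f))} := by
  rw [← isSeqClosed_iff_isClosed]
  intro f g hf hg
  simp only [Set.mem_ofPred_eq] at hf ⊢
  rw [Metric.tendsto_atTop]
  intro ε hε
  have h1 : Tendsto (fun j => |K| * ‖f j - g‖) atTop (𝓝 0) := by
    have := (tendsto_iff_norm_sub_tendsto_zero.1 hg).const_mul |K|
    simpa using this
  obtain ⟨j, hj⟩ := (h1.eventually (gt_mem_nhds (show (0:ℝ) < ε/3 by positivity))).exists
  obtain ⟨k0, hk0⟩ := Metric.tendsto_atTop.1 (hf j) (ε/3) (by positivity)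
  refine ⟨k0, fun k hk => ?_⟩
  have h2 := hk0 k hk
  have hle : K * ‖f j - g‖ ≤ |K| * ‖f j - g‖ := by gcongr; exact le_abs_self K
  have h3 := (hM k (f j) g).trans hle
  have h4 := (hN (f j) g).trans hle
  rw [← dist_eq_norm] at h3 h4
  rw [dist_comm] at h3
  calc dist (M k g) (N g) ≤ dist (M k g) (M k (f j)) + dist (M k (f j)) (N (f j)) + dist (N (f j)) (N g) :=
        dist_triangle4 _ _ _ _
    _ < ε := by linarith

lemma mFourier_tor {m : ℕ} (k : Fin m → ℤ) (y : Fin m → ℝ) :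
    UnitAddTorus.mFourier k (tor y) = (Real.fourierChar ((fun i => (k i : ℝ)) ⬝ᵥ y) : ℂ) := by
  rw [Real.fourierChar_apply]
  simp only [UnitAddTorus.mFourier, tor, ContinuousMap.coe_mk, fourier_coe_apply]
  rw [← Complex.exp_sum]
  congr 1
  simp only [dotProduct]
  push_cast
  rw [Finset.mul_sum, Finset.sum_mul]
  refine Finset.sum_congr rfl fun i _ => ?_
  ring

lemma integral_mFourier_cube {m : ℕ} (k : Fin m → ℤ) (hk : k ≠ 0) :
    ∫ y in cube m, UnitAddTorus.mFourier k (tor y) = 0 := by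
  obtain ⟨i, hi⟩ := Function.ne_iff.1 hk
  have h1 : (volume.restrict (cube m) : Measure (Fin m → ℝ)) =
      Measure.pi fun _ => volume.restrict (Set.Ioo (0:ℝ) 1) := by
    rw [cube, volume_pi, Measure.restrict_pi_pi]
  rw [h1]
  simp only [UnitAddTorus.mFourier, tor, ContinuousMap.coe_mk]
  rw [integral_fintype_prod_eq_prod (f := fun i (x : ℝ) => (fourier (k i) (x : UnitAddCircle) : ℂ))]
  apply Finset.prod_eq_zero (Finset.mem_univ i)
  rw [← integral_Ioc_eq_integral_Ioo, ← intervalIntegral.integral_of_le zero_le_one]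
  simp only [fourier_coe_apply]
  have hc : (2 * Real.pi * Complex.I * (k i : ℂ)) ≠ 0 := by
    have : (k i : ℂ) ≠ 0 := by exact_mod_cast hi
    simp [Real.pi_ne_zero, Complex.I_ne_zero, this]
  have : ∀ x : ℝ, 2 * Real.pi * Complex.I * (k i : ℂ) * x / (1:ℝ) = (2 * Real.pi * Complex.I * (k i : ℂ)) * x := by
    intro x; simp
  simp only [this]
  rw [integral_exp_mul_complex hc]
  have h2 : Complex.exp (2 * Real.pi * Complex.I * (k i : ℂ) * (1:ℝ)) = 1 := by
    rw [Complex.exp_eq_one_iff]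
    exact ⟨k i, by push_cast; ring⟩
  rw [h2]; simp

lemma erg_fourier {n m : ℕ} (R : Matrix (Fin m) (Fin n) ℝ) (hR : Irr R) (c : ℕ → ℝ)
    (hc : Tendsto c atTop atTop) (A : Set (Fin n → ℝ)) (hA : MeasurableSet A)
    (k : Fin m → ℤ) (hk : k ≠ 0) :
    Tendsto (fun j => ∫ x in A, UnitAddTorus.mFourier k (tor (c j • R.mulVec x))) atTop (𝓝 0) := by
  let w : StrongDual ℝ (Fin n → ℝ) := LinearMap.toContinuousLinearMap
    (∑ i, (R.transpose.mulVec (fun i => (k i : ℝ)) i) • LinearMap.proj i)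
  have hw : ∀ x, w x = R.transpose.mulVec (fun i => (k i : ℝ)) ⬝ᵥ x := fun x => by
    simp [w, dotProduct]
  have hw0 : w ≠ 0 := by
    intro h
    apply hR k hk
    ext i
    have := hw (Pi.single i 1)
    rw [h] at this
    simpa using this.symm
  have hco : Tendsto (fun j => -(c j • w)) atTop (cocompact (StrongDual ℝ (Fin n → ℝ))) := by
    rw [← Metric.cobounded_eq_cocompact, ← comap_norm_atTop, tendsto_comap_iff]
    have : (norm ∘ fun j => -(c j • w)) = fun j => |c j| * ‖w‖ := by
      ext j; simp [norm_smul]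
    rw [this]
    exact (tendsto_abs_atTop_atTop.comp hc).atTop_mul_const (norm_pos_iff.2 hw0)
  have := (_root_.tendsto_integral_exp_smul_cocompact (A.indicator (fun _ => (1:ℂ))) volume).comp hco
  refine this.congr fun j => ?_
  rw [← integral_indicator hA]
  simp only [Function.comp]
  congr 1; ext x
  by_cases hx : x ∈ A
  · simp only [hx, Set.indicator_of_mem]
    rw [mFourier_tor, Circle.smul_def, smul_eq_mul, mul_one]
    congr 2
    simp only [_root_.neg_apply, _root_.smul_apply, neg_neg, hw, smul_eq_mul,
      dotProduct_smul]
    rw [Matrix.mulVec_transpose, Matrix.dotProduct_mulVec]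
  · simp [hx]

lemma erg_complex {n m : ℕ} (R : Matrix (Fin m) (Fin n) ℝ) (hR : Irr R) (c : ℕ → ℝ)
    (hc : Tendsto c atTop atTop) (A : Set (Fin n → ℝ)) (hA : MeasurableSet A) (hfin : volume A ≠ ⊤)
    (f : C(UnitAddTorus (Fin m), ℂ)) :
    Tendsto (fun j => ∫ x in A, f (tor (c j • R.mulVec x))) atTop
      (𝓝 (volume.real A * ∫ y in cube m, f (tor y))) := by
  have : IsFiniteMeasure (volume.restrict A) := ⟨by simpa using hfin.lt_top⟩
  have hct : ∀ j, Continuous fun x : Fin n → ℝ => tor (c j • R.mulVec x) := fun j =>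
    continuous_tor.comp ((continuous_const (y := R).matrix_mulVec continuous_id).const_smul (c j))
  have hi1 : ∀ (j : ℕ) (f : C(UnitAddTorus (Fin m), ℂ)),
      Integrable (fun x => f (tor (c j • R.mulVec x))) (volume.restrict A) := fun j f =>
    Integrable.of_bound (f.continuous.comp (hct j)).aestronglyMeasurable ‖f‖
      (.of_forall fun x => f.norm_coe_le_norm _)
  have hi2 : ∀ (f : C(UnitAddTorus (Fin m), ℂ)),
      Integrable (fun y => f (tor y)) (volume.restrict (cube m)) := fun f =>
    Integrable.of_bound (f.continuous.comp continuous_tor).aestronglyMeasurable ‖f‖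
      (.of_forall fun x => f.norm_coe_le_norm _)
  let P : Submodule ℂ C(UnitAddTorus (Fin m), ℂ) :=
    { carrier := {f | Tendsto (fun j => ∫ x in A, f (tor (c j • R.mulVec x))) atTop
        (𝓝 (volume.real A * ∫ y in cube m, f (tor y)))}
      zero_mem' := by simp
      add_mem' := by
        intro f g hf hg
        simp only [Set.mem_ofPred_eq, ContinuousMap.add_apply] at *
        rw [integral_add (hi2 f) (hi2 g), mul_add]
        refine (hf.add hg).congr fun j => ?_
        rw [integral_add (hi1 j f) (hi1 j g)]
      smul_mem' := by
        intro a f hf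
        simp only [Set.mem_ofPred_eq, ContinuousMap.smul_apply, smul_eq_mul] at *
        simp only [integral_const_mul]
        rw [mul_left_comm]
        exact hf.const_mul a }
  have hclosed : IsClosed (P : Set C(UnitAddTorus (Fin m), ℂ)) := by
    apply isClosed_setOf_tendsto_lip (fun j (f : C(UnitAddTorus (Fin m), ℂ)) => ∫ x in A, f (tor (c j • R.mulVec x)))
      (fun f => volume.real A * ∫ y in cube m, f (tor y)) (volume.real A)
    · intro j f g
      rw [← integral_sub (hi1 j f) (hi1 j g)]
      refine (norm_integral_le_of_norm_le_const (C := ‖f - g‖) (.of_forall fun x => ?_)).trans ?_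
      · exact (f - g).norm_coe_le_norm _
      · simp [mul_comm]
    · intro f g
      rw [← mul_sub, ← integral_sub (hi2 f) (hi2 g), norm_mul]
      rw [Complex.norm_real, Real.norm_of_nonneg measureReal_nonneg]
      gcongr
      refine (norm_integral_le_of_norm_le_const (C := ‖f - g‖) (.of_forall fun x => ?_)).trans ?_
      · exact (f - g).norm_coe_le_norm _
      · simp
  have hspan : Submodule.span ℂ (Set.range (UnitAddTorus.mFourier (d := Fin m))) ≤ P := by
    rw [Submodule.span_le]
    rintro _ ⟨k, rfl⟩
    change Tendsto _ _ _
    by_cases hk : k = 0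
    · subst hk
      simp [UnitAddTorus.mFourier_zero]
    · rw [integral_mFourier_cube k hk, mul_zero]
      exact erg_fourier R hR c hc A hA k hk
  have htop : (⊤ : Submodule ℂ C(UnitAddTorus (Fin m), ℂ)) ≤ P := by
    rw [← UnitAddTorus.span_mFourier_closure_eq_top]
    exact Submodule.topologicalClosure_minimal _ hspan hclosed
  exact htop (Submodule.mem_top (x := f))

lemma erg_real {n m : ℕ} (R : Matrix (Fin m) (Fin n) ℝ) (hR : Irr R) (c : ℕ → ℝ)
    (hc : Tendsto c atTop atTop) (A : Set (Fin n → ℝ)) (hA : MeasurableSet A) (hfin : volume A ≠ ⊤)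
    (f : C(UnitAddTorus (Fin m), ℝ)) :
    Tendsto (fun j => ∫ x in A, f (tor (c j • R.mulVec x))) atTop
      (𝓝 (volume.real A * ∫ y in cube m, f (tor y))) := by
  have h := erg_complex R hR c hc A hA hfin ⟨fun t => (f t : ℂ), by fun_prop⟩
  simp only [ContinuousMap.coe_mk, integral_complex_ofReal] at h
  rw [← Complex.ofReal_mul] at h
  exact (Complex.continuous_re.tendsto _).comp h

lemma erg {n m : ℕ} (R : Matrix (Fin m) (Fin n) ℝ) (hR : Irr R) (c : ℕ → ℝ)
    (hc : Tendsto c atTop atTop) (Ω : Set (Fin n → ℝ))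
    (hfin : volume Ω ≠ ⊤) (F : (Fin n → ℝ) → C(UnitAddTorus (Fin m), ℝ))
    (hF : Integrable F (volume.restrict Ω)) :
    Tendsto (fun j => ∫ x in Ω, F x (tor (c j • R.mulVec x))) atTop
      (𝓝 (∫ x in Ω, ∫ y in cube m, F x (tor y))) := by
  have : IsFiniteMeasure (volume.restrict Ω) := ⟨by simpa using hfin.lt_top⟩
  have hct : ∀ j, Continuous fun x : Fin n → ℝ => tor (c j • R.mulVec x) := fun j =>
    continuous_tor.comp ((continuous_const (y := R).matrix_mulVec continuous_id).const_smul (c j))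
  have hi1 : ∀ (j : ℕ) (F : (Fin n → ℝ) → C(UnitAddTorus (Fin m), ℝ)), Integrable F (volume.restrict Ω) →
      Integrable (fun x => F x (tor (c j • R.mulVec x))) (volume.restrict Ω) := fun j F hF =>
    hF.norm.mono' (continuous_eval.comp_aestronglyMeasurable
      (hF.aestronglyMeasurable.prodMk (hct j).aestronglyMeasurable))
      (.of_forall fun x => (F x).norm_coe_le_norm _)
  have hi2 : ∀ (f : C(UnitAddTorus (Fin m), ℝ)),
      Integrable (fun y => f (tor y)) (volume.restrict (cube m)) := fun f =>
    Integrable.of_bound (f.continuous.comp continuous_tor).aestronglyMeasurable ‖f‖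
      (.of_forall fun x => f.norm_coe_le_norm _)
  let I0 : C(UnitAddTorus (Fin m), ℝ) →ₗ[ℝ] ℝ :=
    { toFun := fun f => ∫ y in cube m, f (tor y)
      map_add' := fun f g => by
        simp only [ContinuousMap.add_apply]
        exact integral_add (hi2 f) (hi2 g)
      map_smul' := fun a f => by simp [integral_const_mul] }
  have hI0 : ∀ f, ‖I0 f‖ ≤ 1 * ‖f‖ := fun f => by
    refine (norm_integral_le_of_norm_le_const (C := ‖f‖) (.of_forall fun x => ?_)).trans ?_
    · exact f.norm_coe_le_norm _
    · simp
  let I : C(UnitAddTorus (Fin m), ℝ) →L[ℝ] ℝ := LinearMap.mkContinuous I0 1 hI0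
  have hI : ∀ f, I f = ∫ y in cube m, f (tor y) := fun f => rfl
  have hI1 : ‖I‖ ≤ 1 := LinearMap.mkContinuous_norm_le _ zero_le_one _
  simp only [← hI]
  revert hF F
  intro F hF
  refine Integrable.induction (P := fun F : (Fin n → ℝ) → C(UnitAddTorus (Fin m), ℝ) =>
    Tendsto (fun j => ∫ x in Ω, F x (tor (c j • R.mulVec x))) atTop
      (𝓝 (∫ x in Ω, I (F x)))) ?_ ?_ ?_ ?_ hF
  · intro f s hs hμ
    have h := erg_real R hR c hc (toMeasurable volume Ω ∩ s) ((measurableSet_toMeasurable _ _).inter hs)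
      (((measure_mono Set.inter_subset_left).trans (measure_toMeasurable Ω).le).trans_lt hfin.lt_top).ne f
    have hr : volume.restrict (toMeasurable volume Ω ∩ s) = (volume.restrict Ω).restrict s := by
      rw [Set.inter_comm, ← Measure.restrict_restrict hs, Measure.restrict_toMeasurable hfin]
    have e1 : (∫ x in Ω, I (s.indicator (fun _ => f) x)) =
        volume.real (toMeasurable volume Ω ∩ s) * ∫ y in cube m, f (tor y) := by
      have : ∀ x, I (s.indicator (fun _ => f) x) = s.indicator (fun _ => I f) x := fun x => by
        by_cases hx : x ∈ s <;> simp [hx]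
      simp only [this]
      rw [integral_indicator hs, ← hr]
      simp [hI]
    rw [e1]
    refine h.congr fun j => ?_
    rw [hr, ← integral_indicator hs]
    congr 1; ext x
    by_cases hx : x ∈ s <;> simp [hx]
  · intro f g _ hf hg h1 h2
    simp only [Pi.add_apply, ContinuousMap.add_apply, map_add]
    rw [integral_add (I.integrable_comp hf) (I.integrable_comp hg)]
    refine (h1.add h2).congr fun j => ?_
    rw [integral_add (hi1 j f hf) (hi1 j g hg)]
  · apply isClosed_setOf_tendsto_lip (fun j (F : (Fin n → ℝ) →₁[volume.restrict Ω] C(UnitAddTorus (Fin m), ℝ)) =>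
      ∫ x in Ω, F x (tor (c j • R.mulVec x))) (fun F => ∫ x in Ω, I (F x)) 1
    · intro j f g
      rw [← integral_sub (hi1 j f (L1.integrable_coeFn f)) (hi1 j g (L1.integrable_coeFn g)), one_mul,
        L1.norm_eq_integral_norm]
      refine norm_integral_le_of_norm_le (L1.integrable_coeFn _).norm ?_
      filter_upwards [Lp.coeFn_sub f g] with x hx
      rw [hx]
      exact (f x - g x).norm_coe_le_norm _
    · intro f g
      rw [← integral_sub (I.integrable_comp (L1.integrable_coeFn f)) (I.integrable_comp (L1.integrable_coeFn g)),
        one_mul, L1.norm_eq_integral_norm]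
      refine norm_integral_le_of_norm_le (L1.integrable_coeFn _).norm ?_
      filter_upwards [Lp.coeFn_sub f g] with x hx
      rw [hx, ← map_sub, Pi.sub_apply]
      exact (I.le_opNorm _).trans (mul_le_of_le_one_left (norm_nonneg _) hI1)
  · intro f g hfg hf h
    have e : ∫ x in Ω, I (g x) = ∫ x in Ω, I (f x) :=
      integral_congr_ae (hfg.mono fun x hx => by simp only [hx])
    rw [e]
    refine h.congr fun j => ?_
    exact integral_congr_ae (hfg.mono fun x hx => by simp only [hx])

lemma lp_norm_eq {Z E : Type*} [MeasurableSpace Z] [NormedAddCommGroup E] (ν : Measure Z) {q : ℝ} (hq : 0 < q)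
    (g : Lp E (ENNReal.ofReal q) ν) : ‖g‖ = (∫ a, ‖g a‖ ^ q ∂ν) ^ (1 / q) := by
  rw [Lp.norm_def, (Lp.memLp g).eLpNorm_eq_integral_rpow_norm (by simp [hq]) (by simp)]
  rw [ENNReal.toReal_ofReal, ENNReal.toReal_ofReal hq.le, one_div]
  positivity

/-- Evaluating an `L^q(X; C(T))` function along a measurable map. -/
lemma memLp_eval {Z T : Type*} [MeasurableSpace Z] [TopologicalSpace T] [CompactSpace T]
    (ν : Measure Z) (r : ENNReal) (t : Z → T) (ht : AEStronglyMeasurable t ν)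
    (Φ : Z → C(T, ℝ)) (hΦ : MemLp Φ r ν) : MemLp (fun z => Φ z (t z)) r ν :=
  hΦ.norm.mono (continuous_eval.comp_aestronglyMeasurable
      (hΦ.aestronglyMeasurable.prodMk ht))
      (.of_forall fun x => by simpa using (Φ x).norm_coe_le_norm _)

lemma functional {Z T : Type*} [MeasurableSpace Z] [TopologicalSpace T] [CompactSpace T]
    (ν : Measure Z) {p q : ℝ} (hpq : p.HolderConjugate q)
    [Fact (1 ≤ ENNReal.ofReal q)] (f : Z → ℝ) (hf : MemLp f (ENNReal.ofReal p) ν)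
    (t : Z → T) (ht : AEStronglyMeasurable t ν) (K : ℝ) (hK : (∫ a, ‖f a‖ ^ p ∂ν) ^ (1 / p) ≤ K) :
    ∃ G : StrongDual ℝ (Lp C(T, ℝ) (ENNReal.ofReal q) ν), (∀ g, G g = ∫ z, f z * g z (t z) ∂ν) ∧
      ‖G‖ ≤ K ∧ ∀ g, |G g| ≤ K * (∫ z, |g z (t z)| ^ q ∂ν) ^ (1/q) := by
  have hK0 : 0 ≤ K := le_trans (by positivity) hK
  have hm : ∀ g : Lp C(T, ℝ) (ENNReal.ofReal q) ν, MemLp (fun z => g z (t z)) (ENNReal.ofReal q) ν :=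
    fun g => memLp_eval ν _ t ht g (Lp.memLp g)
  have hintg : ∀ g : Lp C(T, ℝ) (ENNReal.ofReal q) ν, Integrable (fun z => f z * g z (t z)) ν := fun g => by
    have : ENNReal.HolderConjugate (ENNReal.ofReal p) (ENNReal.ofReal q) := hpq.ennrealOfReal
    exact MemLp.integrable_mul hf (hm g)
  let G0 : Lp C(T, ℝ) (ENNReal.ofReal q) ν →ₗ[ℝ] ℝ :=
    { toFun := fun g => ∫ z, f z * g z (t z) ∂ν
      map_add' := fun g h => by
        rw [← integral_add (hintg g) (hintg h)]
        apply integral_congr_ae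
        filter_upwards [Lp.coeFn_add g h] with z hz
        rw [hz]; simp [mul_add]
      map_smul' := fun c g => by
        rw [RingHom.id_apply, smul_eq_mul, ← integral_const_mul]
        apply integral_congr_ae
        filter_upwards [Lp.coeFn_smul c g] with z hz
        rw [hz]; simp; ring }
  have hb : ∀ g, |G0 g| ≤ K * (∫ z, |g z (t z)| ^ q ∂ν) ^ (1/q) := fun g => by
    have h1 := integral_mul_norm_le_Lp_mul_Lq hpq hf (hm g)
    calc |G0 g| ≤ ∫ z, ‖f z * g z (t z)‖ ∂ν := norm_integral_le_integral_norm (fun z => f z * g z (t z))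
      _ = ∫ z, ‖f z‖ * ‖g z (t z)‖ ∂ν := by simp
      _ ≤ _ := h1
      _ ≤ _ := by
        simp only [Real.norm_eq_abs] at hK ⊢
        gcongr
  have hb2 : ∀ g, ‖G0 g‖ ≤ K * ‖g‖ := fun g => by
    refine (hb g).trans ?_
    rw [lp_norm_eq ν hpq.symm.pos g]
    have hq := hpq.symm.pos
    refine mul_le_mul_of_nonneg_left (Real.rpow_le_rpow (by positivity) ?_ (by positivity)) hK0
    refine integral_mono ?_ ?_ fun z => ?_
    · have := (hm g).integrable_norm_rpow (by simp [hq]) (by simp)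
      rwa [ENNReal.toReal_ofReal hq.le] at this
    · have := (Lp.memLp g).integrable_norm_rpow (by simp [hq]) (by simp)
      rwa [ENNReal.toReal_ofReal hq.le] at this
    · have := (g z).norm_coe_le_norm (t z)
      simp only [Real.norm_eq_abs] at this ⊢
      gcongr
  exact ⟨LinearMap.mkContinuous G0 K hb2, fun g => rfl, LinearMap.mkContinuous_norm_le _ hK0 _, hb⟩

lemma represent {Z W T : Type*} [MeasurableSpace Z] [MeasurableSpace W] [TopologicalSpace T] [CompactSpace T]
    (ν : Measure Z) [IsFiniteMeasure ν] (κ : Measure W) [IsFiniteMeasure κ]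
    {p q : ℝ} (hpq : p.HolderConjugate q)
    [Fact (1 ≤ ENNReal.ofReal q)] (t : W → T) (ht : AEStronglyMeasurable t κ)
    (L : StrongDual ℝ (Lp C(T, ℝ) (ENNReal.ofReal q) ν)) (K : ℝ)
    (hL : ∀ g, |L g| ≤ K * (∫ z, |g z.1 (t z.2)| ^ q ∂(ν.prod κ)) ^ (1/q)) :
    ∃ f : Z × W → ℝ, MemLp f (ENNReal.ofReal p) (ν.prod κ) ∧
      ∀ g, L g = ∫ z, f z * g z.1 (t z.2) ∂(ν.prod κ) ∧
        Integrable (fun z => f z * g z.1 (t z.2)) (ν.prod κ) := by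
  have hq := hpq.symm.pos
  have hm : ∀ g : Lp C(T, ℝ) (ENNReal.ofReal q) ν,
      MemLp (fun z : Z × W => g z.1 (t z.2)) (ENNReal.ofReal q) (ν.prod κ) :=
    fun g => memLp_eval (ν.prod κ) _ (fun z => t z.2) ht.comp_snd (fun z => g z.1)
      ((Lp.memLp g).comp_fst κ)
  let J : Lp C(T, ℝ) (ENNReal.ofReal q) ν →ₗ[ℝ] Lp ℝ (ENNReal.ofReal q) (ν.prod κ) :=
    { toFun := fun g => (hm g).toLp _
      map_add' := fun g h => by
        rw [← MemLp.toLp_add]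
        apply MemLp.toLp_congr
        filter_upwards [Measure.quasiMeasurePreserving_fst.ae (Lp.coeFn_add g h)] with z hz
        simp only [Pi.add_apply]
        rw [hz]; rfl
      map_smul' := fun c g => by
        rw [RingHom.id_apply, ← MemLp.toLp_const_smul]
        apply MemLp.toLp_congr
        filter_upwards [Measure.quasiMeasurePreserving_fst.ae (Lp.coeFn_smul c g)] with z hz
        simp only [Pi.smul_apply]
        rw [hz]; rfl }
  have hJ : ∀ g, J g =ᵐ[ν.prod κ] fun z => g z.1 (t z.2) := fun g => (hm g).coeFn_toLp
  have hJn : ∀ g, |L g| ≤ K * ‖J g‖ := fun g => by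
    rw [lp_norm_eq _ hq (J g)]
    refine (hL g).trans (le_of_eq ?_)
    congr 2
    apply integral_congr_ae
    filter_upwards [hJ g] with z hz
    rw [hz, Real.norm_eq_abs]
  have hker : J.rangeRestrict.ker ≤ (L : Lp C(T, ℝ) (ENNReal.ofReal q) ν →ₗ[ℝ] ℝ).ker := by
    intro g hg
    rw [LinearMap.ker_rangeRestrict, LinearMap.mem_ker] at hg
    have := hJn g
    rw [hg, norm_zero, mul_zero] at this
    simpa using this
  obtain ⟨M0, hM0⟩ : ∃ M0 : J.range →ₗ[ℝ] ℝ, ∀ g, M0 (J.rangeRestrict g) = L g := by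
    obtain ⟨s, hs⟩ := J.rangeRestrict.exists_rightInverse_of_surjective J.range_rangeRestrict
    refine ⟨(L : Lp C(T, ℝ) (ENNReal.ofReal q) ν →ₗ[ℝ] ℝ) ∘ₗ s, fun g => ?_⟩
    have h1 : s (J.rangeRestrict g) - g ∈ J.rangeRestrict.ker := by
      rw [LinearMap.mem_ker, map_sub, sub_eq_zero]
      exact LinearMap.congr_fun hs _
    have := hker h1
    rw [LinearMap.mem_ker, map_sub, sub_eq_zero] at this
    exact this
  let M : StrongDual ℝ J.range := LinearMap.mkContinuous M0 K (by
    rintro ⟨_, g, rfl⟩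
    have := hM0 g
    change ‖M0 (J.rangeRestrict g)‖ ≤ K * ‖J g‖
    rw [this]; exact hJn g)
  obtain ⟨G, hG, -⟩ := exists_extension_norm_eq J.range M
  obtain ⟨f, hf, hfG⟩ := riesz (ν.prod κ) hpq G
  refine ⟨f, hf, fun g => ⟨?_, ?_⟩⟩
  · rw [← hM0 g]
    have := hG (J.rangeRestrict g)
    change G (J g) = M0 _ at this
    rw [← this, hfG]
    apply integral_congr_ae
    filter_upwards [hJ g] with z hz
    rw [hz]
  · have : ENNReal.HolderConjugate (ENNReal.ofReal p) (ENNReal.ofReal q) := hpq.ennrealOfReal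
    exact MemLp.integrable_mul hf (hm g)

/-- Pointwise a.e.-measurable families of continuous functions are a.e. strongly measurable
as maps into `C(T, ℝ)`. -/
lemma aesm_of_eval {Z T : Type*} [MeasurableSpace Z] [TopologicalSpace T] [CompactSpace T]
    [TopologicalSpace.SeparableSpace T] [Nonempty T] [SecondCountableTopology C(T, ℝ)]
    (ν : Measure Z) (F : Z → C(T, ℝ))
    (h : ∀ t, AEMeasurable (fun z => F z t) ν) : AEStronglyMeasurable F ν := by
  borelize C(T, ℝ)
  have hball : ∀ (f : C(T, ℝ)) (r : ℝ), 0 ≤ r → NullMeasurableSet (F ⁻¹' Metric.closedBall f r) ν := by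
    intro f r hr
    have : F ⁻¹' Metric.closedBall f r =
        ⋂ i : ℕ, {z | |F z (TopologicalSpace.denseSeq T i) - f (TopologicalSpace.denseSeq T i)| ≤ r} := by
      ext z
      simp only [Set.mem_preimage, Metric.mem_closedBall, Set.mem_iInter, Set.mem_ofPred_eq]
      rw [ContinuousMap.dist_le hr]
      constructor
      · intro h i
        exact h _
      · intro h
        have hc : IsClosed {t | dist (F z t) (f t) ≤ r} :=
          isClosed_le (by fun_prop) continuous_const
        intro t
        have : t ∈ closure (Set.range (TopologicalSpace.denseSeq T)) :=
          TopologicalSpace.denseRange_denseSeq T t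
        refine closure_minimal ?_ hc this
        rintro _ ⟨i, rfl⟩
        exact h i
    rw [this]
    refine NullMeasurableSet.iInter fun i => ?_
    exact nullMeasurableSet_le (((h _).sub aemeasurable_const).abs) aemeasurable_const
  have hnull : NullMeasurable F ν := by
    have : @Measurable (NullMeasurableSpace Z ν) C(T, ℝ) _ _ F := by
      refine measurable_of_isOpen fun s hs => ?_
      have hr : ∀ x : s, ∃ r > 0, Metric.closedBall (x : C(T, ℝ)) r ⊆ s := fun x =>
        Metric.nhds_basis_closedBall.mem_iff.1 (hs.mem_nhds x.2)
      choose r hr0 hrs using hr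
      obtain ⟨I, hI, hU⟩ := TopologicalSpace.isOpen_iUnion_countable
        (fun x : s => Metric.ball (x : C(T, ℝ)) (r x)) (fun _ => Metric.isOpen_ball)
      have hs' : s = ⋃ x ∈ I, Metric.closedBall (x : C(T, ℝ)) (r x) := by
        apply Set.Subset.antisymm
        · intro y hy
          have : y ∈ ⋃ x : s, Metric.ball (x : C(T, ℝ)) (r x) :=
            Set.mem_iUnion.2 ⟨⟨y, hy⟩, Metric.mem_ball_self (hr0 _)⟩
          rw [← hU] at this
          obtain ⟨x, hx, hxy⟩ := Set.mem_iUnion₂.1 this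
          exact Set.mem_iUnion₂.2 ⟨x, hx, Metric.ball_subset_closedBall hxy⟩
        · exact Set.iUnion₂_subset fun x _ => hrs x
      change NullMeasurableSet (F ⁻¹' s) ν
      rw [hs', Set.preimage_iUnion₂]
      exact NullMeasurableSet.biUnion hI fun x _ => hball _ _ (hr0 x).le
    exact fun s hs => this hs
  exact hnull.aemeasurable.aestronglyMeasurable

lemma tor_quot {m : ℕ} : IsOpenQuotientMap (tor (m := m)) :=
  IsOpenQuotientMap.piMap (fun _ => QuotientAddGroup.isOpenQuotientMap_mk)

lemma tor_eq {m : ℕ} {y z : Fin m → ℝ} (h : tor y = tor z) :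
    ∃ k : Fin m → ℤ, z = y + fun i => (k i : ℝ) := by
  have : ∀ i, ∃ k : ℤ, z i = y i + k := by
    intro i
    have hi : ((y i : ℝ) : UnitAddCircle) = (z i : UnitAddCircle) := congrFun h i
    have h2 := QuotientAddGroup.eq.1 hi
    obtain ⟨k, hk⟩ := AddSubgroup.mem_zmultiples_iff.1 h2
    refine ⟨k, ?_⟩
    simp at hk
    linarith
  choose k hk using this
  exact ⟨k, funext hk⟩

lemma test_lift {n m : ℕ} {q : ℝ} (hq : 0 < q) (Ω : Set (Fin n → ℝ))
    (φ : (Fin n → ℝ) → (Fin m → ℝ) → ℝ) (hφ : TestFun q Ω φ) :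
    ∃ Φ : Lp C(UnitAddTorus (Fin m), ℝ) (ENNReal.ofReal q) (volume.restrict Ω),
      ∀ᵐ x ∂(volume.restrict Ω), ∀ y, Φ x (tor y) = φ x y := by
  obtain ⟨h1, h2, h3, h4⟩ := hφ
  have hs : Function.Surjective (tor (m := m)) := tor_quot.surjective
  have key : ∀ x y, φ x (Function.surjInv hs (tor y)) = φ x y := by
    intro x y
    obtain ⟨k, hk⟩ := tor_eq (Function.surjInv_eq hs (tor y))
    conv_rhs => rw [hk]
    exact (h2 x k _).symm
  let F : (Fin n → ℝ) → C(UnitAddTorus (Fin m), ℝ) := fun x =>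
    ⟨fun t => φ x (Function.surjInv hs t), by
      rw [tor_quot.isQuotientMap.continuous_iff]
      exact (h1 x).congr fun y => (key x y).symm⟩
  have hF : ∀ x y, F x (tor y) = φ x y := key
  have hm : AEStronglyMeasurable F (volume.restrict Ω) :=
    aesm_of_eval _ F fun t => h3 _
  have hn : ∀ x, ‖F x‖ = ⨆ y, |φ x y| := by
    intro x
    rw [ContinuousMap.norm_eq_iSup_norm, ← hs.iSup_comp]
    simp only [hF, Real.norm_eq_abs]
  have hL : MemLp F (ENNReal.ofReal q) (volume.restrict Ω) := by
    rw [← integrable_norm_rpow_iff hm (by simpa using hq) (by simp)]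
    simpa only [hn, ENNReal.toReal_ofReal hq.le] using h4
  refine ⟨hL.toLp F, ?_⟩
  filter_upwards [hL.coeFn_toLp] with x hx y
  rw [hx, hF]

lemma erg_pow {n m : ℕ} (R : Matrix (Fin m) (Fin n) ℝ) (hR : Irr R) (c : ℕ → ℝ)
    (hc : Tendsto c atTop atTop) (Ω : Set (Fin n → ℝ)) (hfin : volume Ω ≠ ⊤) {q : ℝ} (hq : 0 < q)
    (g : Lp C(UnitAddTorus (Fin m), ℝ) (ENNReal.ofReal q) (volume.restrict Ω)) :
    Tendsto (fun j => ∫ x in Ω, |g x (tor (c j • R.mulVec x))| ^ q) atTop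
      (𝓝 (∫ z, |g z.1 (tor z.2)| ^ q ∂((volume.restrict Ω).prod (volume.restrict (cube m))))) := by
  let P : C(ℝ, ℝ) := ⟨fun s => |s| ^ q, continuous_abs.rpow_const fun _ => Or.inr hq.le⟩
  have : IsFiniteMeasure (volume.restrict Ω) := ⟨by simpa using hfin.lt_top⟩
  have hm : AEStronglyMeasurable (fun x => P.comp (g x)) (volume.restrict Ω) :=
    (ContinuousMap.continuous_postcomp P).comp_aestronglyMeasurable (Lp.aestronglyMeasurable g)
  have hi : Integrable (fun x => ‖g x‖ ^ q) (volume.restrict Ω) := by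
    have := (Lp.memLp g).integrable_norm_rpow (by simpa using hq) (by simp)
    simpa only [ENNReal.toReal_ofReal hq.le] using this
  have hF : Integrable (fun x => P.comp (g x)) (volume.restrict Ω) := by
    refine hi.mono' hm (.of_forall fun x => ?_)
    rw [ContinuousMap.norm_le _ (by positivity)]
    intro t
    have h0 : (0:ℝ) ≤ |g x t| ^ q := by positivity
    change ‖|g x t| ^ q‖ ≤ _
    rw [Real.norm_of_nonneg h0]
    exact Real.rpow_le_rpow (abs_nonneg _) ((g x).norm_coe_le_norm t) hq.le
  have h := erg R hR c hc Ω hfin _ hF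
  have hprod : MemLp (fun z : (Fin n → ℝ) × (Fin m → ℝ) => g z.1 (tor z.2)) (ENNReal.ofReal q)
      ((volume.restrict Ω).prod (volume.restrict (cube m))) :=
    memLp_eval _ _ (fun z : (Fin n → ℝ) × (Fin m → ℝ) => tor z.2)
      (continuous_tor.comp continuous_snd).aestronglyMeasurable
      (fun z : (Fin n → ℝ) × (Fin m → ℝ) => g z.1) ((Lp.memLp g).comp_fst _)
  have hintg : Integrable (fun z : (Fin n → ℝ) × (Fin m → ℝ) => |g z.1 (tor z.2)| ^ q)
      ((volume.restrict Ω).prod (volume.restrict (cube m))) := by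
    have := hprod.integrable_norm_rpow (by simpa using hq) (by simp)
    simpa only [ENNReal.toReal_ofReal hq.le, Real.norm_eq_abs] using this
  rw [integral_prod _ hintg]
  exact h

lemma extract {E : Type*} [NormedAddCommGroup E] [NormedSpace ℝ E]
    [TopologicalSpace.SeparableSpace E] (G : ℕ → StrongDual ℝ E) (K : ℝ) (hG : ∀ k, ‖G k‖ ≤ K) :
    ∃ (θ : ℕ → ℕ) (L : StrongDual ℝ E), StrictMono θ ∧
      ∀ g, Tendsto (fun j => G (θ j) g) atTop (𝓝 (L g)) := by
  have hs := WeakDual.isSeqCompact_closedBall ℝ E 0 K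
  obtain ⟨L, _, θ, hθ, hL⟩ := hs (x := fun k => StrongDual.toWeakDual (G k)) (fun k => by
    simpa using hG k)
  refine ⟨θ, WeakDual.toStrongDual L, hθ, fun g => ?_⟩
  exact ((WeakDual.eval_continuous g).tendsto L).comp hL

/-- compactness for weak two-scale cut-and-projection convergence:
a bounded family in `L^p(Ω)` admits a vanishing subsequence of scales along which it
two-scale converges weakly to some `Y^m`-periodic `u₀ ∈ L^p(Ω × Y^m)`. -/
theorem stmt0 {n m : ℕ} (hnm : n < m) (p q : ℝ) (hp : 1 < p) (hpq : 1 / p + 1 / q = 1)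
    (Ω : Set (Fin n → ℝ)) (hΩo : IsOpen Ω) (hΩb : Bornology.IsBounded Ω)
    (R : Matrix (Fin m) (Fin n) ℝ) (hR : Irr R)
    (u : ℝ → (Fin n → ℝ) → ℝ)
    (hmeas : ∀ η ∈ Set.Ioo (0:ℝ) 1, AEMeasurable (u η) (volume.restrict Ω))
    (hbdd : ∃ C : ℝ, ∀ η ∈ Set.Ioo (0:ℝ) 1,
      (Integrable (fun x => |u η x| ^ p) (volume.restrict Ω)) ∧
      ∫ x in Ω, |u η x| ^ p ≤ C) :
    ∃ η : ℕ → ℝ, (∀ k, η k ∈ Set.Ioo (0:ℝ) 1) ∧ Tendsto η atTop (𝓝 0) ∧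
      ∃ u₀ : (Fin n → ℝ) → (Fin m → ℝ) → ℝ,
        (∀ x, Zper (u₀ x)) ∧
        Integrable (fun z : (Fin n → ℝ) × (Fin m → ℝ) => |u₀ z.1 z.2| ^ p)
          ((volume.restrict Ω).prod (volume.restrict (cube m))) ∧
        WeakTwoScale q Ω R η (fun k => u (η k)) u₀ := by
  have hc : p.HolderConjugate q := Real.holderConjugate_iff.2 ⟨hp, by simpa using hpq⟩
  have hp0 : 0 < p := hc.pos
  have hq0 : 0 < q := hc.symm.pos
  have hq1 : 1 < q := hc.symm.lt
  have : Fact (1 ≤ ENNReal.ofReal q) := ⟨by simpa using hq1.le⟩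
  have : Fact (ENNReal.ofReal q ≠ ⊤) := ⟨by simp⟩
  have hfin : volume Ω ≠ ⊤ := hΩb.measure_lt_top.ne
  have : IsFiniteMeasure (volume.restrict Ω) := ⟨by simpa using hfin.lt_top⟩
  obtain ⟨C, hC⟩ := hbdd
  let η0 : ℕ → ℝ := fun k => 1 / ((k:ℝ) + 2)
  have hη0 : ∀ k, η0 k ∈ Set.Ioo (0:ℝ) 1 := fun k => by
    refine ⟨by positivity, ?_⟩
    have : (0:ℝ) ≤ k := Nat.cast_nonneg k
    rw [div_lt_one (by positivity)]
    linarith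
  have hinv : Tendsto (fun k => (η0 k)⁻¹) atTop atTop := by
    simp only [η0, one_div, inv_inv]
    exact tendsto_atTop_add_const_right _ _ tendsto_natCast_atTop_atTop
  have hη0t : Tendsto η0 atTop (𝓝 0) := by
    have := tendsto_inv_atTop_zero.comp hinv
    simpa [Function.comp_def] using this
  have hmem : ∀ k, MemLp (u (η0 k)) (ENNReal.ofReal p) (volume.restrict Ω) := fun k => by
    rw [← integrable_norm_rpow_iff (hmeas _ (hη0 k)).aestronglyMeasurable (by simpa using hp0)
      (by simp)]
    simpa only [ENNReal.toReal_ofReal hp0.le, Real.norm_eq_abs] using (hC _ (hη0 k)).1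
  have hKb : ∀ k, (∫ a in Ω, ‖u (η0 k) a‖ ^ p) ^ (1 / p) ≤ C ^ (1 / p) := fun k =>
    Real.rpow_le_rpow (by positivity) (hC _ (hη0 k)).2 (by positivity)
  have htor : ∀ s : ℝ, AEStronglyMeasurable (fun x : Fin n → ℝ => tor (s • R.mulVec x))
      (volume.restrict Ω) := fun s =>
    (continuous_tor.comp ((Continuous.matrix_mulVec continuous_const continuous_id).const_smul
      s)).aestronglyMeasurable
  have hfun := fun k => functional (volume.restrict Ω) hc (u (η0 k)) (hmem k)
    (fun x => tor ((η0 k)⁻¹ • R.mulVec x)) (htor _) (C ^ (1 / p)) (hKb k)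
  choose G hG1 hG2 hG3 using hfun
  obtain ⟨θ, L, hθ, hL⟩ := extract G (C ^ (1 / p)) hG2
  have hLb : ∀ g, |L g| ≤ C ^ (1 / p) * (∫ z, |g z.1 (tor z.2)| ^ q
      ∂((volume.restrict Ω).prod (volume.restrict (cube m)))) ^ (1/q) := fun g => by
    have h1 := erg_pow R hR _ (hinv.comp hθ.tendsto_atTop) Ω hfin hq0 g
    have h2 := (h1.rpow_const (p := 1 / q) (Or.inr (by positivity))).const_mul (C ^ (1 / p))
    exact le_of_tendsto_of_tendsto' (hL g).abs h2 fun j => hG3 (θ j) g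
  obtain ⟨f, hf, hfL⟩ := represent (volume.restrict Ω) (volume.restrict (cube m)) hc tor
    continuous_tor.aestronglyMeasurable L _ hLb
  have hfr : ∀ y ∈ cube m, (fun i => Int.fract (y i)) = y := fun y hy => by
    funext i
    have := hy i (Set.mem_univ i)
    exact Int.fract_eq_self.2 ⟨this.1.le, this.2⟩
  have hcube : MeasurableSet (cube m) :=
    MeasurableSet.univ_pi fun _ => measurableSet_Ioo
  have hae : ∀ᵐ z ∂((volume.restrict Ω).prod (volume.restrict (cube m))), z.2 ∈ cube m :=
    Measure.quasiMeasurePreserving_snd.ae (ae_restrict_mem hcube)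
  refine ⟨fun k => η0 (θ k), fun k => hη0 _, hη0t.comp hθ.tendsto_atTop,
    fun x y => f (x, fun i => Int.fract (y i)), ?_, ?_, ?_⟩
  · intro x k y
    simp [Int.fract_add_intCast]
  · have h1 := hf.integrable_norm_rpow (by simpa using hp0) (by simp)
    simp only [ENNReal.toReal_ofReal hp0.le, Real.norm_eq_abs] at h1
    refine h1.congr ?_
    filter_upwards [hae] with z hz
    simp only [hfr _ hz]
  · intro φ hφ
    obtain ⟨Φ, hΦ⟩ := test_lift hq0 Ω φ hφ
    have h1 := hL Φ
    rw [(hfL Φ).1, integral_prod _ (hfL Φ).2] at h1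
    have h2 : ∫ x in Ω, ∫ y in cube m, f (x, fun i => Int.fract (y i)) * φ x y =
        ∫ x in Ω, ∫ y in cube m, f (x, y) * Φ x (tor y) := by
      refine integral_congr_ae ?_
      filter_upwards [hΦ] with x hx
      refine setIntegral_congr_fun hcube fun y hy => ?_
      simp only [hfr _ hy, hx]
    rw [h2]
    refine h1.congr fun j => ?_
    rw [hG1]
    refine integral_congr_ae ?_
    filter_upwards [hΦ] with x hx
    rw [hx]
end
end

section
/- Let R : ℝⁿ → ℝ^m be a linear map satisfying R^T k ≠ 0 for all nonzero k ∈ ℤ^m, and let f(x,y) ∈ L¹(Ω; C_♯(Y^m)) where Ω ⊂ ℝⁿ is bounded open. Then x ↦ f(x, Rx/η) is measurable on Ω, ‖f(·, R·/η)‖_{L¹(Ω)} ≤ ∫_Ω sup_{y ∈ Y^m} |f(x,y)| dx, and lim_{η→0} ∫_Ω f(x, Rx/η) dx = ∫_Ω ∫_{Y^m} f(x,y) dx dy. -/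
open MeasureTheory Filter Topology Matrix

noncomputable section

section TwoScaleHelpers

open UnitAddTorus

/-- We normalise the measure on the unit circle to have total volume 1. -/
local instance circleMeasureSpace : MeasureSpace UnitAddCircle := ⟨AddCircle.haarAddCircle⟩

local instance circleProb : IsProbabilityMeasure (volume : Measure UnitAddCircle) :=
  inferInstanceAs (IsProbabilityMeasure AddCircle.haarAddCircle)

/-- Convergence of the oscillating integrals to the averaged integral. -/
def OscConv {X T : Type*} [MeasurableSpace X] (μ : Measure X) [TopologicalSpace T] [CompactSpace T]
    (l : Filter ℝ) (φ : ℝ → X → T) (L : C(T, ℂ) →L[ℂ] ℂ) (F : X → C(T, ℂ)) : Prop :=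
  Tendsto (fun η => ∫ x, F x (φ η x) ∂μ) l (𝓝 (∫ x, L (F x) ∂μ))

lemma osc_integrable {X T : Type*} [MeasurableSpace X] {μ : Measure X}
    [TopologicalSpace T] [CompactSpace T] {ψ : X → T} (hψ : AEStronglyMeasurable ψ μ)
    {F : X → C(T, ℂ)} (hF : Integrable F μ) : Integrable (fun x => F x (ψ x)) μ := by
  refine hF.norm.mono' ?_ (ae_of_all _ fun x => (F x).norm_coe_le_norm _)
  have := (continuous_eval (F := C(T, ℂ)) (X := T) (Y := ℂ)).comp_aestronglyMeasurable
    (hF.aestronglyMeasurable.prodMk hψ)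
  exact this

lemma OscConv.of_approx {X T : Type*} [MeasurableSpace X] {μ : Measure X}
    [TopologicalSpace T] [CompactSpace T]
    {l : Filter ℝ} {φ : ℝ → X → T} (hφ : ∀ η, AEStronglyMeasurable (φ η) μ)
    {L : C(T, ℂ) →L[ℂ] ℂ} (hL : ∀ c, ‖L c‖ ≤ ‖c‖) {F : X → C(T, ℂ)} (hF : Integrable F μ)
    (h : ∀ ε > 0, ∃ G, Integrable G μ ∧ OscConv μ l φ L G ∧ ∫ x, ‖F x - G x‖ ∂μ ≤ ε) :
    OscConv μ l φ L F := by
  rw [OscConv, Metric.tendsto_nhds]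
  intro ε hε
  obtain ⟨G, hG, hP, hFG⟩ := h (ε / 4) (by positivity)
  rw [OscConv, Metric.tendsto_nhds] at hP
  filter_upwards [hP (ε / 4) (by positivity)] with η hη
  have h1 : ‖∫ x, F x (φ η x) ∂μ - ∫ x, G x (φ η x) ∂μ‖ ≤ ε / 4 := by
    rw [← integral_sub (osc_integrable (hφ η) hF) (osc_integrable (hφ η) hG)]
    refine (norm_integral_le_of_norm_le (hF.sub hG).norm (ae_of_all _ fun x => ?_)).trans hFG
    exact (F x - G x).norm_coe_le_norm (φ η x)
  have h2 : ‖∫ x, L (F x) ∂μ - ∫ x, L (G x) ∂μ‖ ≤ ε / 4 := by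
    rw [← integral_sub (L.integrable_comp hF) (L.integrable_comp hG)]
    refine (norm_integral_le_of_norm_le (hF.sub hG).norm (ae_of_all _ fun x => ?_)).trans hFG
    rw [← map_sub]
    exact hL _
  rw [← dist_eq_norm] at h1 h2
  have h3 := dist_triangle4 (∫ x, F x (φ η x) ∂μ) (∫ x, G x (φ η x) ∂μ) (∫ x, L (G x) ∂μ)
    (∫ x, L (F x) ∂μ)
  rw [dist_comm (∫ x, L (G x) ∂μ)] at h3
  linarith

lemma OscConv.add {X T : Type*} [MeasurableSpace X] {μ : Measure X}
    [TopologicalSpace T] [CompactSpace T]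
    {l : Filter ℝ} {φ : ℝ → X → T} (hφ : ∀ η, AEStronglyMeasurable (φ η) μ)
    {L : C(T, ℂ) →L[ℂ] ℂ} {F G : X → C(T, ℂ)} (hF : Integrable F μ) (hG : Integrable G μ)
    (hPF : OscConv μ l φ L F) (hPG : OscConv μ l φ L G) :
    OscConv μ l φ L (F + G) := by
  have := Tendsto.add hPF hPG
  rw [← integral_add (L.integrable_comp hF) (L.integrable_comp hG)] at this
  rw [OscConv]
  simp only [Pi.add_apply, map_add, ContinuousMap.add_apply]
  refine this.congr fun η => ?_
  rw [← integral_add (osc_integrable (hφ η) hF) (osc_integrable (hφ η) hG)]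

lemma OscConv.const_smul {X T : Type*} [MeasurableSpace X] {μ : Measure X}
    [TopologicalSpace T] [CompactSpace T]
    {l : Filter ℝ} {φ : ℝ → X → T}
    {L : C(T, ℂ) →L[ℂ] ℂ} {F : X → C(T, ℂ)} (a : ℂ)
    (hPF : OscConv μ l φ L F) :
    OscConv μ l φ L (a • F) := by
  have := Tendsto.const_smul hPF a
  rw [OscConv]
  simp only [Pi.smul_apply, map_smul, ContinuousMap.smul_apply, integral_smul]
  exact this

lemma OscConv.congr_ae {X T : Type*} [MeasurableSpace X] {μ : Measure X}
    [TopologicalSpace T] [CompactSpace T]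
    {l : Filter ℝ} {φ : ℝ → X → T}
    {L : C(T, ℂ) →L[ℂ] ℂ} {F G : X → C(T, ℂ)} (h : F =ᵐ[μ] G)
    (hPF : OscConv μ l φ L F) :
    OscConv μ l φ L G := by
  rw [OscConv] at *
  rw [← integral_congr_ae (h.mono fun x hx => congrArg L hx)]
  refine hPF.congr fun η => integral_congr_ae (h.mono fun x hx => ?_)
  simp only [hx]

lemma OscConv.of_indicator_span {X T : Type*} [MeasurableSpace X] {μ : Measure X}
    [IsFiniteMeasure μ] [TopologicalSpace T] [CompactSpace T]
    {l : Filter ℝ} {φ : ℝ → X → T} (hφ : ∀ η, AEStronglyMeasurable (φ η) μ)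
    {L : C(T, ℂ) →L[ℂ] ℂ} (hL : ∀ c, ‖L c‖ ≤ ‖c‖) (S : Set C(T, ℂ))
    (hS : (Submodule.span ℂ S).topologicalClosure = ⊤)
    (h : ∀ c ∈ S, ∀ s, MeasurableSet s → OscConv μ l φ L (s.indicator fun _ => c))
    {F : X → C(T, ℂ)} (hF : Integrable F μ) : OscConv μ l φ L F := by
  have hi : ∀ (c : C(T, ℂ)) s, MeasurableSet s → Integrable (s.indicator fun _ => c) μ :=
    fun c s hs => (integrable_const c).indicator hs
  refine Integrable.induction (OscConv μ l φ L) ?_ ?_ ?_ ?_ hF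
  · intro c s hs _
    have hspan : ∀ c ∈ Submodule.span ℂ S, OscConv μ l φ L (s.indicator fun _ => c) := by
      intro c hc
      induction hc using Submodule.span_induction with
      | mem c hc => exact h c hc s hs
      | zero => simpa [OscConv] using tendsto_const_nhds
      | add a b _ _ ha hb =>
        have := OscConv.add hφ (hi a s hs) (hi b s hs) ha hb
        rwa [← Set.indicator_add'] at this
      | smul a b _ hb =>
        have := OscConv.const_smul a hb
        have e : (s.indicator fun _ => a • b) = a • s.indicator (fun _ : X => b) :=
          Set.indicator_const_smul s a (fun _ => b)
        rwa [e]
    refine OscConv.of_approx hφ hL (hi c s hs) fun ε hε => ?_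
    have hc : c ∈ closure (Submodule.span ℂ S : Set C(T, ℂ)) := by
      rw [← Submodule.topologicalClosure_coe, hS]; trivial
    obtain ⟨b, hb, hcb⟩ := Metric.mem_closure_iff.mp hc (ε / (μ.real Set.univ + 1)) (by positivity)
    refine ⟨_, hi b s hs, hspan b hb, ?_⟩
    have : ∀ x, ‖s.indicator (fun _ => c) x - s.indicator (fun _ => b) x‖
        ≤ ε / (μ.real Set.univ + 1) := by
      intro x
      by_cases hx : x ∈ s
      · simp only [hx, Set.indicator_of_mem]
        rw [← dist_eq_norm]; exact hcb.le
      · simp only [hx, not_false_eq_true, Set.indicator_of_notMem, sub_zero, norm_zero]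
        positivity
    calc _ ≤ ∫ x, ε / (μ.real Set.univ + 1) ∂μ :=
          integral_mono ((hi c s hs).sub (hi b s hs)).norm (integrable_const _) this
      _ = μ.real Set.univ * (ε / (μ.real Set.univ + 1)) := by simp
      _ ≤ ε := by
        rw [mul_div_assoc', div_le_iff₀ (by positivity)]
        nlinarith [measureReal_nonneg (μ := μ) (s := Set.univ)]
  · intro f g _ hf hg hPf hPg
    exact OscConv.add hφ hf hg hPf hPg
  · refine isClosed_of_closure_subset fun f hf => ?_
    refine OscConv.of_approx hφ hL (L1.integrable_coeFn f) fun ε hε => ?_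
    obtain ⟨g, hg, hfg⟩ := Metric.mem_closure_iff.mp hf ε hε
    refine ⟨g, L1.integrable_coeFn g, hg, ?_⟩
    rw [L1.dist_eq_integral_dist] at hfg
    simpa only [dist_eq_norm] using hfg.le
  · intro f g hfg _ hPf
    exact hPf.congr_ae hfg

lemma stronglyMeasurable_of_eval {X T : Type*} [MeasurableSpace X]
    [TopologicalSpace T] [CompactSpace T] [SecondCountableTopology T] [T2Space T] [Nonempty T]
    {F : X → C(T, ℂ)} (hF : ∀ t, Measurable fun x => F x t) : StronglyMeasurable F := by
  borelize C(T, ℂ)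
  have hd : ∀ g, Measurable fun x => dist (F x) g := by
    intro g
    refine measurable_of_Iic fun r => ?_
    have : (fun x => dist (F x) g) ⁻¹' Set.Iic r =
        ⋂ n : ℕ, {x | dist (F x (TopologicalSpace.denseSeq T n))
          (g (TopologicalSpace.denseSeq T n)) ≤ r} := by
      ext x
      simp only [Set.mem_preimage, Set.mem_Iic, Set.mem_iInter, Set.mem_ofPred_eq]
      rw [ContinuousMap.dist_le_iff_of_nonempty]
      refine ⟨fun h n => h _, fun h t => ?_⟩
      have hcl : IsClosed {t | dist (F x t) (g t) ≤ r} :=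
        isClosed_le (by fun_prop) continuous_const
      have := (TopologicalSpace.denseRange_denseSeq T).closure_eq ▸
        hcl.closure_subset_iff.mpr (Set.range_subset_iff.mpr h)
      exact this (Set.mem_univ t)
    rw [this]
    exact MeasurableSet.iInter fun n =>
      measurableSet_le ((hF _).dist measurable_const) measurable_const
  refine Measurable.stronglyMeasurable ?_
  refine measurable_of_isOpen fun U hU => ?_
  choose! r hr hrU using Metric.isOpen_iff.mp hU
  obtain ⟨t, htU, htc, ht⟩ := TopologicalSpace.countable_cover_nhdsWithin
    (s := U) (f := fun c => Metric.ball c (r c))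
    (fun c hc => mem_nhdsWithin_of_mem_nhds (Metric.ball_mem_nhds c (hr c hc)))
  have : U = ⋃ c ∈ t, Metric.ball c (r c) :=
    Set.Subset.antisymm ht (Set.iUnion₂_subset fun c hc => hrU c (htU hc))
  rw [this, Set.preimage_iUnion₂]
  exact MeasurableSet.biUnion htc fun c _ => measurableSet_lt (hd c) measurable_const

/-- The projection onto the torus. -/
def torProj (m : ℕ) : (Fin m → ℝ) → UnitAddTorus (Fin m) := Pi.map fun _ y => (y : UnitAddCircle)

lemma torProj_quot (m : ℕ) : IsOpenQuotientMap (torProj m) :=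
  IsOpenQuotientMap.piMap fun _ => QuotientAddGroup.isOpenQuotientMap_mk

lemma torProj_eq {m : ℕ} {y z : Fin m → ℝ} (h : torProj m y = torProj m z) :
    ∃ k : Fin m → ℤ, z = y + fun i => (k i : ℝ) := by
  have : ∀ i, ∃ k : ℤ, z i = y i + k := by
    intro i
    have hi : ((y i : ℝ) : UnitAddCircle) = (z i : ℝ) := congrFun h i
    rw [eq_comm, ← sub_eq_zero, ← AddCircle.coe_sub, AddCircle.coe_eq_zero_iff] at hi
    obtain ⟨k, hk⟩ := hi
    refine ⟨k, ?_⟩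
    simp only [zsmul_eq_mul, mul_one] at hk
    linarith
  choose k hk using this
  exact ⟨k, funext hk⟩

/-- A continuous periodic function as a continuous function on the torus. -/
lemma exists_torLift {m : ℕ} (g : (Fin m → ℝ) → ℝ) (hg : Continuous g) (hp : Zper g) :
    ∃ G : C(UnitAddTorus (Fin m), ℂ), ∀ y, G (torProj m y) = (g y : ℂ) := by
  let q : C(Fin m → ℝ, UnitAddTorus (Fin m)) := ⟨torProj m, (torProj_quot m).continuous⟩
  have hq : IsQuotientMap q := (torProj_quot m).isQuotientMap
  let g' : C(Fin m → ℝ, ℂ) := ⟨fun y => (g y : ℂ), by fun_prop⟩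
  have hfac : Function.FactorsThrough g' q := by
    intro y z hyz
    obtain ⟨k, rfl⟩ := torProj_eq hyz
    simp [g', hp k y]
  exact ⟨hq.lift g' hfac, fun y => DFunLike.congr_fun (hq.lift_comp g' hfac) y⟩

lemma integral_mFourier {m : ℕ} (k : Fin m → ℤ) (hk : k ≠ 0) :
    ∫ t, mFourier k t = 0 := by
  obtain ⟨i, hi⟩ := Function.ne_iff.mp hk
  simp only [mFourier, ContinuousMap.coe_mk]
  rw [MeasureTheory.integral_fintype_prod_volume_eq_prod]
  apply Finset.prod_eq_zero (Finset.mem_univ i)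
  have h := congrFun (fourierCoeff_fourier (T := 1) (k i)) 0
  rw [Pi.single_eq_of_ne (show (0 : ℤ) ≠ k i from Ne.symm hi)] at h
  simp only [fourierCoeff, neg_zero, fourier_zero, one_smul] at h
  exact h

lemma mFourier_torProj {n m : ℕ} (R : Matrix (Fin m) (Fin n) ℝ) (k : Fin m → ℤ) (η : ℝ)
    (x : Fin n → ℝ) : mFourier k (torProj m (η⁻¹ • R.mulVec x)) =
      (Real.fourierChar (η⁻¹ * (R.transpose.mulVec (fun i => (k i : ℝ)) ⬝ᵥ x)) : ℂ) := by
  have h1 : R.transpose.mulVec (fun i => (k i : ℝ)) ⬝ᵥ x = ∑ i, (k i : ℝ) * R.mulVec x i := by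
    rw [Matrix.mulVec_transpose, ← Matrix.dotProduct_mulVec]; rfl
  rw [h1, Real.fourierChar_apply]
  simp only [mFourier, ContinuousMap.coe_mk, torProj, Pi.map_apply, fourier_coe_apply]
  rw [← Complex.exp_sum]
  congr 1
  push_cast
  rw [Finset.mul_sum, Finset.mul_sum, Finset.sum_mul]
  refine Finset.sum_congr rfl fun i _ => ?_
  simp only [Pi.smul_apply, smul_eq_mul]
  push_cast
  ring

/-- Integration over the torus as a continuous functional. -/
def torInt (m : ℕ) : C(UnitAddTorus (Fin m), ℂ) →L[ℂ] ℂ :=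
  LinearMap.mkContinuous
    { toFun := fun c => ∫ t, c t
      map_add' := fun a b => by
        simp only [ContinuousMap.add_apply]
        exact integral_add (a.continuous.integrable_of_hasCompactSupport (HasCompactSupport.of_compactSpace _))
          (b.continuous.integrable_of_hasCompactSupport (HasCompactSupport.of_compactSpace _))
      map_smul' := fun a b => by
        simp only [ContinuousMap.smul_apply, integral_smul, RingHom.id_apply] } 1 (fun c => by
      change ‖∫ t, c t‖ ≤ 1 * ‖c‖
      rw [one_mul]
      refine (norm_integral_le_of_norm_le_const (ae_of_all _ c.norm_coe_le_norm)).trans ?_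
      simp)

lemma torInt_apply {m : ℕ} (c : C(UnitAddTorus (Fin m), ℂ)) : torInt m c = ∫ t, c t := rfl

lemma torInt_le {m : ℕ} (c : C(UnitAddTorus (Fin m), ℂ)) : ‖torInt m c‖ ≤ ‖c‖ := by
  have := (torInt m).le_of_opNorm_le (LinearMap.mkContinuous_norm_le _ zero_le_one _) c
  simpa using this

lemma osc_mFourier {n m : ℕ} (Ω : Set (Fin n → ℝ)) (hΩ : MeasurableSet Ω)
    (R : Matrix (Fin m) (Fin n) ℝ) (hR : Irr R) (k : Fin m → ℤ) (s : Set (Fin n → ℝ))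
    (hs : MeasurableSet s) :
    OscConv (volume.restrict Ω) (𝓝[>] 0) (fun η x => torProj m (η⁻¹ • R.mulVec x)) (torInt m)
      (s.indicator fun _ => mFourier k) := by
  rw [OscConv]
  by_cases hk : k = 0
  · subst hk
    refine Tendsto.congr (f₁ := fun _ => ∫ x in Ω, torInt m (s.indicator (fun _ => mFourier 0) x))
      (fun η => integral_congr_ae (ae_of_all _ fun x => ?_)) tendsto_const_nhds
    by_cases hx : x ∈ s <;> simp [hx, torInt_apply, mFourier_zero]
  · have h0 : ∫ x in Ω, torInt m (s.indicator (fun _ => mFourier k) x) = 0 := by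
      rw [← integral_zero (Fin n → ℝ) ℂ]
      refine integral_congr_ae (ae_of_all _ fun x => ?_)
      by_cases hx : x ∈ s <;> simp [hx, torInt_apply, integral_mFourier k hk]
    rw [h0]
    set v := R.transpose.mulVec (fun i => (k i : ℝ)) with hv
    have hv0 : v ≠ 0 := hR k hk
    let w : StrongDual ℝ (Fin n → ℝ) := LinearMap.toContinuousLinearMap (dotProductBilin ℝ ℝ v)
    have hw : ∀ x, w x = v ⬝ᵥ x := fun x => rfl
    have hw0 : w ≠ 0 := by
      intro h
      apply hv0
      have := hw v
      rw [h] at this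
      exact dotProduct_self_eq_zero.mp this.symm
    have hcc : Tendsto (fun η : ℝ => -(η⁻¹ • w)) (𝓝[>] 0)
        (cocompact (StrongDual ℝ (Fin n → ℝ))) := by
      rw [← Metric.cobounded_eq_cocompact, ← tendsto_norm_atTop_iff_cobounded]
      simp only [norm_neg, norm_smul]
      refine Tendsto.atTop_mul_const (norm_pos_iff.mpr hw0) ?_
      exact tendsto_norm_atTop_atTop.comp tendsto_inv_nhdsGT_zero
    have := (tendsto_integral_exp_smul_cocompact
      ((s ∩ Ω).indicator fun _ => (1 : ℂ)) (volume : Measure (Fin n → ℝ))).comp hcc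
    refine this.congr fun η => ?_
    simp only [Function.comp_apply]
    rw [← integral_indicator hΩ]
    refine integral_congr_ae (ae_of_all _ fun x => ?_)
    by_cases hxΩ : x ∈ Ω <;> by_cases hx : x ∈ s <;>
      simp [hxΩ, hx, mFourier_torProj, Circle.smul_def, hw, ← hv]

lemma integral_cube {m : ℕ} (G : UnitAddTorus (Fin m) → ℂ) :
    ∫ t, G t = ∫ y in cube m, G (torProj m y) := by
  rw [UnitAddTorus.integral_preimage G 0]
  refine setIntegral_congr_set ?_
  have h1 := Measure.univ_pi_Ioo_ae_eq_Icc (μ := fun _ : Fin m => (volume : Measure ℝ))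
    (f := fun _ => 0) (g := fun _ => 1)
  have h2 := Measure.univ_pi_Ioc_ae_eq_Icc (μ := fun _ : Fin m => (volume : Measure ℝ))
    (f := fun _ => 0) (g := fun _ => 1)
  have h3 : {x : Fin m → ℝ | ∀ i, x i ∈ Set.Ioc ((0 : Fin m → ℝ) i) ((0 : Fin m → ℝ) i + 1)} =
      Set.univ.pi fun _ => Set.Ioc (0:ℝ) 1 := by
    ext x; simp
  rw [h3]
  exact h2.trans h1.symm

end TwoScaleHelpers

/-- for `f ∈ L¹(Ω; C_♯(Y^m))` and `R` satisfying the irrationality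
condition, `x ↦ f(x, Rx/η)` is measurable, its `L¹` norm is bounded by
`∫_Ω sup_y |f(x,y)| dx`, and its integral converges to the mean `∫_Ω ∫_{Y^m} f`. -/
theorem stmt1 {n m : ℕ} (Ω : Set (Fin n → ℝ)) (hΩo : IsOpen Ω)
    (hΩb : Bornology.IsBounded Ω)
    (R : Matrix (Fin m) (Fin n) ℝ) (hR : Irr R)
    (f : (Fin n → ℝ) → (Fin m → ℝ) → ℝ)
    (hcont : ∀ x, Continuous (f x)) (hper : ∀ x, Zper (f x))
    (hmeas : ∀ y, Measurable fun x => f x y)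
    (hint : Integrable (fun x => ⨆ y, |f x y|) (volume.restrict Ω)) :
    (∀ η : ℝ, η ≠ 0 → AEMeasurable (fun x => f x (η⁻¹ • R.mulVec x)) (volume.restrict Ω)) ∧
    (∀ η : ℝ, ∫ x in Ω, |f x (η⁻¹ • R.mulVec x)| ≤ ∫ x in Ω, ⨆ y, |f x y|) ∧
    Tendsto (fun η : ℝ => ∫ x in Ω, f x (η⁻¹ • R.mulVec x)) (𝓝[>] 0)
      (𝓝 (∫ x in Ω, ∫ y in cube m, f x y)) := by
  have hRc : ∀ η : ℝ, Continuous fun x : Fin n → ℝ => η⁻¹ • R.mulVec x := fun η =>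
    (Continuous.matrix_mulVec continuous_const continuous_id).const_smul η⁻¹
  choose F hFe using fun x => exists_torLift (f x) (hcont x) (hper x)
  have hbd : ∀ x, BddAbove (Set.range fun y => |f x y|) := by
    intro x
    refine ⟨‖F x‖, ?_⟩
    rintro _ ⟨y, rfl⟩
    have := (F x).norm_coe_le_norm (torProj m y)
    rw [hFe, Complex.norm_real] at this
    exact this
  have hle : ∀ x y, |f x y| ≤ ⨆ y, |f x y| := fun x y => le_ciSup (hbd x) y
  have hmeas1 : ∀ η : ℝ, Measurable (fun x => f x (η⁻¹ • R.mulVec x)) := by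
    intro η
    have h1 : Measurable (Function.uncurry fun y x => f x y) :=
      measurable_uncurry_of_continuous_of_measurable hcont hmeas
    have h2 : Measurable fun x : Fin n → ℝ => (η⁻¹ • R.mulVec x, x) := by
      refine Measurable.prodMk (Continuous.measurable ?_) measurable_id
      exact hRc η
    exact h1.comp h2
  refine ⟨fun η _ => (hmeas1 η).aemeasurable, fun η => ?_, ?_⟩
  · refine integral_mono (hint.mono' (hmeas1 η).abs.aestronglyMeasurable
      (ae_of_all _ fun x => ?_)) hint fun x => hle x _
    rw [Real.norm_eq_abs, abs_abs]
    exact hle x _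
  · have : IsFiniteMeasure (volume.restrict Ω) :=
      ⟨by rw [Measure.restrict_apply_univ]; exact hΩb.measure_lt_top⟩
    have hFm : StronglyMeasurable F := by
      refine stronglyMeasurable_of_eval fun t => ?_
      obtain ⟨y, rfl⟩ := (torProj_quot m).surjective t
      simp only [hFe]
      exact Complex.measurable_ofReal.comp (hmeas y)
    have hFi : Integrable F (volume.restrict Ω) := by
      refine hint.mono' hFm.aestronglyMeasurable (ae_of_all _ fun x => ?_)
      rw [ContinuousMap.norm_le_of_nonempty]
      intro t
      obtain ⟨y, rfl⟩ := (torProj_quot m).surjective t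
      rw [hFe, Complex.norm_real]
      exact hle x y
    have hφ : ∀ η : ℝ, AEStronglyMeasurable (fun x => torProj m (η⁻¹ • R.mulVec x))
        (volume.restrict Ω) := by
      intro η
      refine Continuous.aestronglyMeasurable ((torProj_quot m).continuous.comp ?_)
      exact hRc η
    have key := OscConv.of_indicator_span (l := 𝓝[>] 0) hφ torInt_le (Set.range UnitAddTorus.mFourier)
      UnitAddTorus.span_mFourier_closure_eq_top
      (by
        rintro _ ⟨k, rfl⟩ s hs
        exact osc_mFourier Ω hΩo.measurableSet R hR k s hs) hFi
    rw [OscConv] at key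
    simp only [torInt_apply, integral_cube, hFe, integral_complex_ofReal] at key
    have := (Complex.continuous_re.tendsto _).comp key
    simpa only [Function.comp_def, Complex.ofReal_re] using this
end
end

section
/- Let R : ℝⁿ → ℝ^m satisfy R^T k ≠ 0 for all nonzero k ∈ ℤ^m, and let φ ∈ L^p(Ω; C_♯(Y^m)), 1 < p < ∞, with Ω ⊂ ℝⁿ bounded open. Then lim_{η→0} ∫_Ω |φ(x, Rx/η)|^p dx = ∫_Ω ∫_{Y^m} |φ(x,y)|^p dx dy. -/
open MeasureTheory Filter Topology Matrix

noncomputable section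

/-- The torus projection. -/
def tproj {m : ℕ} (y : Fin m → ℝ) : UnitAddTorus (Fin m) := fun i => (y i : UnitAddCircle)

lemma tproj_continuous {m : ℕ} : Continuous (tproj (m := m)) := by
  unfold tproj
  exact continuous_pi fun i => (AddCircle.continuous_mk' (1:ℝ)).comp (continuous_apply i)

lemma tproj_quot {m : ℕ} : IsOpenQuotientMap (tproj (m := m)) :=
  IsOpenQuotientMap.piMap (f := fun _ : Fin m => ((↑) : ℝ → UnitAddCircle))
    (fun _ => QuotientAddGroup.isOpenQuotientMap_mk)

lemma closed_tendsto {ι E : Type*} [PseudoMetricSpace E] {l : Filter ι}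
    (T : ι → E → ℂ) (S : E → ℂ) (K : ℝ) 
    (hT : ∀ i f g, dist (T i f) (T i g) ≤ K * dist f g)
    (hS : ∀ f g, dist (S f) (S g) ≤ K * dist f g) :
    IsClosed {f | Tendsto (fun i => T i f) l (𝓝 (S f))} := by
  rw [← isSeqClosed_iff_isClosed]
  intro u f hu huf
  have hu' : ∀ n, Tendsto (fun i => T i (u n)) l (𝓝 (S (u n))) := hu
  change Tendsto (fun i => T i f) l (𝓝 (S f))
  rw [Metric.tendsto_nhds]
  intro ε hε
  have h0 : Tendsto (fun n => K * dist (u n) f) atTop (𝓝 (K * 0)) :=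
    (tendsto_iff_dist_tendsto_zero.1 huf).const_mul K
  rw [mul_zero] at h0
  obtain ⟨n, hn⟩ := (h0.eventually (gt_mem_nhds (show 0 < ε / 3 by positivity))).exists
  filter_upwards [Metric.tendsto_nhds.1 (hu' n) (ε/3) (by positivity)] with i hi
  have h1 := hT i (u n) f
  have h2 := hS (u n) f
  have h3 := dist_triangle4 (T i f) (T i (u n)) (S (u n)) (S f)
  rw [dist_comm (T i f) (T i (u n))] at h3
  linarith

lemma cube_vol (m : ℕ) : (volume : Measure (Fin m → ℝ)).restrict (cube m) =
    Measure.pi fun _ => (volume : Measure ℝ).restrict (Set.Ioo 0 1) := by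
  unfold cube
  rw [volume_pi, Measure.restrict_pi_pi]

instance cube_prob (m : ℕ) : IsProbabilityMeasure ((volume : Measure (Fin m → ℝ)).restrict (cube m)) := by
  rw [cube_vol]
  have : IsProbabilityMeasure ((volume : Measure ℝ).restrict (Set.Ioo 0 1)) := ⟨by simp⟩
  infer_instance

lemma cont_integrable {m : ℕ} {X : Type*} [TopologicalSpace X] [MeasurableSpace X]
    [OpensMeasurableSpace X] [SecondCountableTopology X]
    (μ : Measure X) [IsFiniteMeasure μ] (c : C(UnitAddTorus (Fin m), ℂ)) 
    (γ : X → UnitAddTorus (Fin m)) (hγ : Continuous γ) : Integrable (fun x => c (γ x)) μ := by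
  refine Integrable.of_bound (C := ‖c‖) ?_ (ae_of_all _ fun x => c.norm_coe_le_norm _)
  exact (c.continuous.comp hγ).aestronglyMeasurable

/-- mean over the cube -/
def J (m : ℕ) : C(UnitAddTorus (Fin m), ℂ) →L[ℂ] ℂ :=
  LinearMap.mkContinuous
    { toFun := fun c => ∫ y in cube m, c (tproj y)
      map_add' := fun c d => by
        simp only [ContinuousMap.add_apply]
        exact integral_add (cont_integrable _ c _ tproj_continuous)
          (cont_integrable _ d _ tproj_continuous)
      map_smul' := fun a c => by
        simp only [ContinuousMap.smul_apply, RingHom.id_apply]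
        exact integral_smul _ _ } 1 (fun c => by
      simp only [LinearMap.coe_mk, AddHom.coe_mk, one_mul]
      refine (norm_integral_le_of_norm_le_const (C := ‖c‖)
        (ae_of_all _ fun x => c.norm_coe_le_norm _)).trans ?_
      simp)

lemma J_apply {m : ℕ} (c : C(UnitAddTorus (Fin m), ℂ)) : J m c = ∫ y in cube m, c (tproj y) := rfl

lemma J_norm {m : ℕ} (c : C(UnitAddTorus (Fin m), ℂ)) : ‖J m c‖ ≤ ‖c‖ := by
  rw [J_apply]
  refine (norm_integral_le_of_norm_le_const (C := ‖c‖)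
        (ae_of_all _ fun x => c.norm_coe_le_norm _)).trans ?_
  simp

lemma J_fourier {m : ℕ} (k : Fin m → ℤ) (hk : k ≠ 0) : J m (UnitAddTorus.mFourier k) = 0 := by
  rw [J_apply, cube_vol]
  simp only [UnitAddTorus.mFourier, ContinuousMap.coe_mk, tproj]
  rw [integral_fintype_prod_eq_prod (f := fun i (y : ℝ) => (fourier (k i) (y : UnitAddCircle) : ℂ))]
  obtain ⟨i, hi⟩ := Function.ne_iff.1 hk
  apply Finset.prod_eq_zero (Finset.mem_univ i)
  rw [← integral_Ioc_eq_integral_Ioo, ← intervalIntegral.integral_of_le zero_le_one]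
  have hc : (2 * Real.pi * Complex.I * (k i : ℂ)) ≠ 0 := by
    have : (k i : ℂ) ≠ 0 := by exact_mod_cast hi
    simp [Real.pi_ne_zero, this]
  have : ∀ y : ℝ, (fourier (k i) (y : UnitAddCircle) : ℂ) = 
      Complex.exp ((2 * Real.pi * Complex.I * (k i : ℂ)) * y) := by
    intro y; rw [fourier_coe_apply]; simp
  simp only [this]
  rw [integral_exp_mul_complex hc]
  have : (2 * Real.pi * Complex.I * (k i : ℂ)) * (1:ℝ) = (k i : ℂ) * (2 * Real.pi * Complex.I) := by
    push_cast; ring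
  rw [this, Complex.exp_int_mul_two_pi_mul_I]
  simp

lemma fourier_line {m n : ℕ} (R : Matrix (Fin m) (Fin n) ℝ) (k : Fin m → ℤ) (hη : ℝ) (x : Fin n → ℝ) :
    UnitAddTorus.mFourier k (tproj (hη • R.mulVec x)) =
      (Real.fourierChar (hη * (R.transpose.mulVec (fun i => (k i : ℝ)) ⬝ᵥ x)) : ℂ) := by
  simp only [UnitAddTorus.mFourier, ContinuousMap.coe_mk, tproj, fourier_coe_apply, Real.fourierChar_apply]
  rw [← Complex.exp_sum]
  congr 1
  rw [Matrix.mulVec_transpose, ← Matrix.dotProduct_mulVec]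
  simp only [dotProduct, Pi.smul_apply, smul_eq_mul]
  push_cast
  rw [Finset.mul_sum, Finset.mul_sum, Finset.sum_mul]
  refine Finset.sum_congr rfl fun i _ => ?_
  ring

lemma riemann_leb {m n : ℕ} (R : Matrix (Fin m) (Fin n) ℝ) (hR : Irr R) (k : Fin m → ℤ) (hk : k ≠ 0)
    (A : Set (Fin n → ℝ)) (hA : MeasurableSet A) :
    Tendsto (fun η : ℝ => ∫ x in A, UnitAddTorus.mFourier k (tproj (η⁻¹ • R.mulVec x)))
      (𝓝[>] 0) (𝓝 0) := by
  set v := R.transpose.mulVec (fun i => (k i : ℝ)) with hv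
  have hv0 : v ≠ 0 := hR k hk
  let L : StrongDual ℝ (Fin n → ℝ) := LinearMap.toContinuousLinearMap (dotProductBilin ℝ ℝ v)
  have hL : ∀ x, L x = v ⬝ᵥ x := fun x => rfl
  have hL0 : L ≠ 0 := by
    intro h
    apply hv0
    have := hL v
    rw [h] at this
    exact dotProduct_self_eq_zero.1 this.symm
  have key := tendsto_integral_exp_smul_cocompact (A.indicator fun _ => (1:ℂ)) (volume : Measure (Fin n → ℝ))
  have hw : Tendsto (fun η : ℝ => (-η⁻¹) • L) (𝓝[>] 0) (cocompact _) := by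
    rw [← Metric.cobounded_eq_cocompact, ← tendsto_norm_atTop_iff_cobounded]
    simp only [norm_smul, norm_neg]
    refine Tendsto.atTop_mul_const (norm_pos_iff.2 hL0) ?_
    exact tendsto_norm_atTop_atTop.comp tendsto_inv_nhdsGT_zero
  refine (key.comp hw).congr fun η => ?_
  simp only [Function.comp]
  rw [← integral_indicator hA]
  congr 1
  ext x
  by_cases hx : x ∈ A
  · simp only [Set.indicator_of_mem hx, fourier_line]
    simp [Circle.smul_def, hL, hv]
  · simp [hx]

lemma step_ind {m n : ℕ} (R : Matrix (Fin m) (Fin n) ℝ) (hR : Irr R) 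
    (A : Set (Fin n → ℝ)) (hA : MeasurableSet A) (hfin : volume A ≠ ⊤)
    (c : C(UnitAddTorus (Fin m), ℂ)) :
    Tendsto (fun η : ℝ => ∫ x in A, c (tproj (η⁻¹ • R.mulVec x)))
      (𝓝[>] 0) (𝓝 (∫ _ in A, J m c)) := by
  have : IsFiniteMeasure ((volume : Measure (Fin n → ℝ)).restrict A) := ⟨by simpa using hfin.lt_top⟩
  have hγ : ∀ η : ℝ, Continuous fun x => tproj (η⁻¹ • R.mulVec x) := fun η =>
    tproj_continuous.comp (by fun_prop)
  have hcl := closed_tendsto (l := 𝓝[>] (0:ℝ))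
    (fun (η : ℝ) (c : C(UnitAddTorus (Fin m), ℂ)) => ∫ x in A, c (tproj (η⁻¹ • R.mulVec x)))
    (fun c => ∫ _ in A, J m c) (volume.real A) 
    (by
      intro η f g
      rw [dist_eq_norm, dist_eq_norm,
        ← integral_sub (cont_integrable _ f _ (hγ η)) (cont_integrable _ g _ (hγ η))]
      refine (norm_integral_le_of_norm_le_const (C := ‖f - g‖)
        (ae_of_all _ fun x => (f - g).norm_coe_le_norm _)).trans ?_
      simp [mul_comm])
    (by
      intro f g
      rw [dist_eq_norm, dist_eq_norm, ← integral_sub (integrable_const _) (integrable_const _)]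
      refine (norm_integral_le_of_norm_le_const (C := ‖f - g‖)
        (ae_of_all _ fun x => ?_)).trans ?_
      · rw [← map_sub]; exact J_norm _
      simp [mul_comm])
  have hspan : ∀ c ∈ Submodule.span ℂ (Set.range (UnitAddTorus.mFourier (d := Fin m))),
      Tendsto (fun η : ℝ => ∫ x in A, c (tproj (η⁻¹ • R.mulVec x)))
      (𝓝[>] 0) (𝓝 (∫ _ in A, J m c)) := by
    intro c hc
    induction hc using Submodule.span_induction with
    | mem c hc =>
      obtain ⟨k, rfl⟩ := hc
      by_cases hk : k = 0
      · subst hk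
        rw [UnitAddTorus.mFourier_zero]
        simp [J_apply]
      · rw [J_fourier k hk]
        simpa using riemann_leb R hR k hk A hA
    | zero => simp
    | add f g _ _ hf hg =>
      simp only [ContinuousMap.add_apply, map_add]
      rw [integral_add (integrable_const _) (integrable_const _)]
      refine (hf.add hg).congr fun η => ?_
      rw [integral_add (cont_integrable _ f _ (hγ η)) (cont_integrable _ g _ (hγ η))]
    | smul a f _ hf =>
      simp only [ContinuousMap.smul_apply, map_smul]
      simp only [integral_smul]
      exact hf.const_smul a
  have hmem : c ∈ (Submodule.span ℂ (Set.range (UnitAddTorus.mFourier (d := Fin m)))).topologicalClosure := by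
    rw [UnitAddTorus.span_mFourier_closure_eq_top]; trivial
  exact closure_minimal hspan hcl hmem

lemma eval_aesm {m n : ℕ} {μ : Measure (Fin n → ℝ)} {F : (Fin n → ℝ) → C(UnitAddTorus (Fin m), ℂ)}
    (hF : AEStronglyMeasurable F μ) (γ : (Fin n → ℝ) → UnitAddTorus (Fin m)) (hγ : Continuous γ) :
    AEStronglyMeasurable (fun x => F x (γ x)) μ := by
  have h : Continuous fun q : C(UnitAddTorus (Fin m), ℂ) × UnitAddTorus (Fin m) => q.1 q.2 := by
    fun_prop
  exact h.comp_aestronglyMeasurable (hF.prodMk hγ.aestronglyMeasurable)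

lemma eval_integrable {m n : ℕ} {μ : Measure (Fin n → ℝ)} {F : (Fin n → ℝ) → C(UnitAddTorus (Fin m), ℂ)}
    (hF : Integrable F μ) (γ : (Fin n → ℝ) → UnitAddTorus (Fin m)) (hγ : Continuous γ) :
    Integrable (fun x => F x (γ x)) μ :=
  hF.norm.mono' (eval_aesm hF.1 γ hγ) (ae_of_all _ fun x => (F x).norm_coe_le_norm _)

lemma main_L1 {m n : ℕ} (R : Matrix (Fin m) (Fin n) ℝ) (hR : Irr R) 
    (Ω : Set (Fin n → ℝ)) (hΩ : MeasurableSet Ω) (F : (Fin n → ℝ) → C(UnitAddTorus (Fin m), ℂ))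
    (hF : Integrable F (volume.restrict Ω)) :
    Tendsto (fun η : ℝ => ∫ x in Ω, F x (tproj (η⁻¹ • R.mulVec x)))
      (𝓝[>] 0) (𝓝 (∫ x in Ω, J m (F x))) := by
  have hγ : ∀ η : ℝ, Continuous fun x => tproj (η⁻¹ • R.mulVec x) := fun η =>
    tproj_continuous.comp (by fun_prop)
  refine Integrable.induction (P := fun F : (Fin n → ℝ) → C(UnitAddTorus (Fin m), ℂ) => 
    Tendsto (fun η : ℝ => ∫ x in Ω, F x (tproj (η⁻¹ • R.mulVec x)))
      (𝓝[>] 0) (𝓝 (∫ x in Ω, J m (F x)))) ?_ ?_ ?_ ?_ hF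
  · intro c s hs hfin
    rw [Measure.restrict_apply hs] at hfin
    have e1 : ∀ η : ℝ, ∫ x in Ω, (s.indicator (fun _ => c) x) (tproj (η⁻¹ • R.mulVec x)) =
        ∫ x in s, c (tproj (η⁻¹ • R.mulVec x)) ∂(volume.restrict Ω) := by
      intro η
      rw [← integral_indicator hs]
      congr 1; ext x
      by_cases hx : x ∈ s <;> simp [hx]
    have e2 : ∫ x in Ω, J m (s.indicator (fun _ => c) x) = ∫ x in s, J m c ∂(volume.restrict Ω) := by
      rw [← integral_indicator hs]
      congr 1; ext x
      by_cases hx : x ∈ s <;> simp [hx]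
    simp only [e1, e2, Measure.restrict_restrict hs]
    exact step_ind R hR _ (hs.inter hΩ) hfin.ne c
  · intro f g _ hf hg h1 h2
    simp only [Pi.add_apply, ContinuousMap.add_apply, map_add]
    rw [integral_add ((J m).integrable_comp hf) ((J m).integrable_comp hg)]
    refine (h1.add h2).congr fun η => ?_
    rw [integral_add (eval_integrable hf _ (hγ η)) (eval_integrable hg _ (hγ η))]
  · refine closed_tendsto (E := (Fin n → ℝ) →₁[volume.restrict Ω] C(UnitAddTorus (Fin m), ℂ))
      (fun η f => ∫ x in Ω, f x (tproj (η⁻¹ • R.mulVec x))) (fun f => ∫ x in Ω, J m (f x)) 1 ?_ ?_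
    · intro η f g
      have hf := L1.integrable_coeFn f
      have hg := L1.integrable_coeFn g
      rw [dist_eq_norm, dist_eq_norm, L1.norm_eq_integral_norm, one_mul,
        ← integral_sub (eval_integrable hf _ (hγ η)) (eval_integrable hg _ (hγ η))]
      refine norm_integral_le_of_norm_le (L1.integrable_coeFn (f - g)).norm ?_
      filter_upwards [Lp.coeFn_sub f g] with x hx
      rw [hx]
      exact (f x - g x).norm_coe_le_norm _
    · intro f g
      have hf := L1.integrable_coeFn f
      have hg := L1.integrable_coeFn g
      rw [dist_eq_norm, dist_eq_norm, L1.norm_eq_integral_norm, one_mul,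
        ← integral_sub ((J m).integrable_comp hf) ((J m).integrable_comp hg)]
      refine norm_integral_le_of_norm_le (L1.integrable_coeFn (f - g)).norm ?_
      filter_upwards [Lp.coeFn_sub f g] with x hx
      rw [hx, ← map_sub]
      exact J_norm _
  · intro f g hfg _ h
    have : ∫ x in Ω, J m (g x) = ∫ x in Ω, J m (f x) :=
      integral_congr_ae (hfg.mono fun x hx => by simp only [hx])
    rw [this]
    refine h.congr fun η => ?_
    exact integral_congr_ae (hfg.mono fun x hx => by simp only [hx])

lemma meas_cmap {m n : ℕ} (F : (Fin n → ℝ) → C(UnitAddTorus (Fin m), ℂ))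
    (hF : ∀ t, Measurable fun x => F x t) : StronglyMeasurable F := by
  borelize C(UnitAddTorus (Fin m), ℂ)
  have hd : ∀ c, Measurable fun x => dist (F x) c := by
    intro c
    refine measurable_of_Iic fun r => ?_
    by_cases hr : 0 ≤ r
    · have : (fun x => dist (F x) c) ⁻¹' Set.Iic r =
          ⋂ k : ℕ, {x | dist (F x (TopologicalSpace.denseSeq _ k)) (c (TopologicalSpace.denseSeq _ k)) ≤ r} := by
        ext x
        simp only [Set.mem_preimage, Set.mem_Iic, Set.mem_iInter, Set.mem_ofPred_eq]
        rw [ContinuousMap.dist_le hr]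
        refine ⟨fun h k => h _, fun h t => ?_⟩
        have hcl : IsClosed {t | dist (F x t) (c t) ≤ r} :=
          isClosed_le (by fun_prop) continuous_const
        have := hcl.closure_subset_iff.2 (Set.range_subset_iff.2 h)
        exact this (TopologicalSpace.denseRange_denseSeq _ t)
      rw [this]
      exact MeasurableSet.iInter fun k => measurableSet_le ((hF _).dist measurable_const) measurable_const
    · convert MeasurableSet.empty
      ext x
      simp only [Set.mem_preimage, Set.mem_Iic, Set.mem_empty_iff_false, iff_false, not_le]
      exact (not_le.1 hr).trans_le dist_nonneg
  refine (measurable_of_isOpen fun s hs => ?_).stronglyMeasurable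
  choose! ε hε hb using Metric.isOpen_iff.1 hs
  obtain ⟨T, hT, hU⟩ := TopologicalSpace.isOpen_iUnion_countable
    (fun c : s => Metric.ball (c : C(UnitAddTorus (Fin m), ℂ)) (ε c)) (fun c => Metric.isOpen_ball)
  have : s = ⋃ c ∈ T, Metric.ball (c : C(UnitAddTorus (Fin m), ℂ)) (ε c) := by
    rw [hU]
    apply Set.Subset.antisymm
    · intro c hc
      exact Set.mem_iUnion.2 ⟨⟨c, hc⟩, Metric.mem_ball_self (hε c hc)⟩
    · exact Set.iUnion_subset fun c => hb c c.2
  rw [this]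
  simp only [Set.preimage_iUnion]
  exact MeasurableSet.biUnion hT fun c _ => measurableSet_lt (hd c) measurable_const

lemma tproj_eq {m : ℕ} {α : Type*} {g : (Fin m → ℝ) → α} (hg : Zper g) {y z : Fin m → ℝ}
    (h : tproj y = tproj z) : g y = g z := by
  have : ∀ i, ∃ k : ℤ, z i = y i + k := by
    intro i
    have hi : ((y i : ℝ) : UnitAddCircle) = (z i : ℝ) := congrFun h i
    obtain ⟨k, hk⟩ := AddSubgroup.mem_zmultiples_iff.1 (QuotientAddGroup.eq.1 hi)
    refine ⟨k, ?_⟩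
    simp only [zsmul_eq_mul, mul_one] at hk
    linarith
  choose k hk using this
  rw [← hg k y]
  congr 1
  ext i
  simp [hk]

/-- functions `φ ∈ L^p(Ω; C_♯(Y^m))` are admissible:
`∫_Ω |φ(x, Rx/η)|^p dx → ∫_Ω ∫_{Y^m} |φ(x,y)|^p dx dy` as `η → 0`. -/
theorem stmt2 {n m : ℕ} (p : ℝ) (hp : 1 < p)
    (Ω : Set (Fin n → ℝ)) (hΩo : IsOpen Ω) (hΩb : Bornology.IsBounded Ω)
    (R : Matrix (Fin m) (Fin n) ℝ) (hR : Irr R)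
    (φ : (Fin n → ℝ) → (Fin m → ℝ) → ℝ)
    (hcont : ∀ x, Continuous (φ x)) (hper : ∀ x, Zper (φ x))
    (hmeas : ∀ y, Measurable fun x => φ x y)
    (hint : Integrable (fun x => (⨆ y, |φ x y|) ^ p) (volume.restrict Ω)) :
    Tendsto (fun η : ℝ => ∫ x in Ω, |φ x (η⁻¹ • R.mulVec x)| ^ p) (𝓝[>] 0)
      (𝓝 (∫ x in Ω, ∫ y in cube m, |φ x y| ^ p)) := by
  have hp0 : 0 ≤ p := by linarith
  obtain ⟨σ, hσ⟩ : ∃ σ : UnitAddTorus (Fin m) → (Fin m → ℝ), ∀ t, tproj (σ t) = t :=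
    ⟨Function.surjInv tproj_quot.surjective, Function.surjInv_eq _⟩
  have hlift : ∀ x y, φ x (σ (tproj y)) = φ x y := fun x y => tproj_eq (hper x) (hσ _)
  have hc1 : ∀ x, Continuous fun t => φ x (σ t) := by
    intro x
    rw [← tproj_quot.isQuotientMap.continuous_iff.symm]
    exact (hcont x).congr fun y => (hlift x y).symm
  have hc2 : ∀ x, Continuous fun t => ((|φ x (σ t)| ^ p : ℝ) : ℂ) := fun x =>
    Complex.continuous_ofReal.comp ((hc1 x).abs.rpow_const fun _ => Or.inr hp0)
  let F : (Fin n → ℝ) → C(UnitAddTorus (Fin m), ℂ) := fun x => ⟨_, hc2 x⟩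
  have hFa : ∀ x y, F x (tproj y) = ((|φ x y| ^ p : ℝ) : ℂ) := by
    intro x y
    change ((|φ x (σ (tproj y))| ^ p : ℝ) : ℂ) = _
    rw [hlift]
  have hFm : StronglyMeasurable F := by
    refine meas_cmap F fun t => ?_
    exact Complex.measurable_ofReal.comp ((measurable_norm.comp (hmeas (σ t))).pow_const p)
  have hFi : Integrable F (volume.restrict Ω) := by
    refine hint.mono' hFm.aestronglyMeasurable (ae_of_all _ fun x => ?_)
    have hbdd : BddAbove (Set.range fun y => |φ x y|) := by
      obtain ⟨C, hC⟩ := (isCompact_range (hc1 x).abs).bddAbove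
      refine ⟨C, ?_⟩
      rintro _ ⟨y, rfl⟩
      exact hC ⟨tproj y, by simp only [hlift]⟩
    have hnn : 0 ≤ ⨆ y, |φ x y| := Real.iSup_nonneg fun y => abs_nonneg _
    refine (ContinuousMap.norm_le _ (Real.rpow_nonneg hnn p)).2 fun t => ?_
    change ‖((|φ x (σ t)| ^ p : ℝ) : ℂ)‖ ≤ _
    rw [Complex.norm_real, Real.norm_of_nonneg (by positivity)]
    exact Real.rpow_le_rpow (abs_nonneg _) (le_ciSup hbdd (σ t)) hp0
  have key := main_L1 R hR Ω hΩo.measurableSet F hFi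
  simp only [J_apply, hFa, integral_complex_ofReal] at key
  exact_mod_cast (Complex.continuous_re.tendsto _).comp key
end
end
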